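/- arXiv:2004.12712 — 2 statements merged into one kernel-verified Lean document; each statement's English description precedes it below -/
import Mathlib

section
/- Let 1 < q < ∞, let w ∈ A_q(ℝⁿ) be a weight, and let a be a weight with a ∈ L^q(ℝⁿ, w) such that a^δ ∈ A_q(ℝⁿ) for some δ > 0. Then the Hardy–Littlewood maximal operator is bounded on L^{q)}_a(ℝⁿ, w): there exists a positive constant K_q such that ‖Mg‖_{L^{q)}_a(ℝⁿ,w)} ≤ K_q ‖g‖_{L^{q)}_a(ℝⁿ,w)} for all g ∈ L^{q)}_a(ℝⁿ,w). -/
/-!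
The `ε`-terms of the grand norm are treated differently for small and for large `ε`.

For small `ε` the weights `w a ^ ε` satisfy a Muckenhoupt condition `A_{p₀}` with one exponent
`p₀ < q` and one constant (`BallAp.perturb`). Indeed `w` and its dual weight `w ^ (-1 / (q - 1))`
satisfy a reverse Hölder inequality (`BallAp.reverse_holder`), so Hölder's inequality has room for a
small power of `a`, whose averages are controlled because `a ^ δ` is in `A_q`, and also for lowering
the exponent. Since `q - ε` stays away from `p₀`, the maximal operator is bounded on
`L^{q - ε}(w a ^ ε)` uniformly in `ε` (`BallAp.strong_type`). This follows by integrating over all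
levels `t` a weak-type bound at exponent `p₀` for the part of `g` above `t / 2`
(`BallAp.weak_type`), which comes from the Vitali covering lemma and the doubling property.

For large `ε`, Hölder's inequality with exponents `(q - ε₀) / (q - ε)` and its conjugate bounds the
`ε`-term of `M g` by its `ε₀`-term times a power of `∫ a ^ q w`, which is finite because `a` is in
`L^q(w)`; the `ε₀`-term is covered by the first case.

The reverse Hölder inequality rests on `BallAp.level_set`. If `t` exceeds the average of `w` over a
ball `B`, almost every point of `B` with `w > t` is the centre of a stopping ball over which
`w 1_B` has average above `t`, while its average over the ball enlarged five times is at most `t`.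
The `A_p` condition forces `w > β t` on a fixed proportion of such a ball, so a Vitali selection
bounds the `w`-mass of `{w > t}` by a multiple of `t |{w > β t}|`. Integrating against
`t ^ (γ - 1)` with `γ` small lets the right-hand side be absorbed; truncating `w` makes the absorbed
integral finite.

All of this is carried out for weights that are positive everywhere and for Euclidean balls;
changing the weights on a null set affects neither the hypotheses nor the norms.
-/

open MeasureTheory Metric Set ENNReal

/-- The weighted Lebesgue norm `‖f‖_{L^p(Ω,v)} = (∫_Ω |f|^p v dx)^{1/p}`. -/
noncomputable def wLqNorm {n : ℕ} (p : ℝ) (v : EuclideanSpace ℝ (Fin n) → ℝ)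
    (Ω : Set (EuclideanSpace ℝ (Fin n))) (f : EuclideanSpace ℝ (Fin n) → ℝ) : ℝ≥0∞ :=
  (∫⁻ x in Ω, ENNReal.ofReal |f x| ^ p * ENNReal.ofReal (v x)) ^ (1 / p)

/-- The generalized grand Lebesgue norm
`‖f‖_{L^{q)}_a(Ω,w)} = sup_{0<ε<q−1} (ε ∫_Ω |f|^{q−ε} w a^ε dx)^{1/(q−ε)}`. -/
noncomputable def grandNorm {n : ℕ} (q : ℝ) (w a : EuclideanSpace ℝ (Fin n) → ℝ)
    (Ω : Set (EuclideanSpace ℝ (Fin n))) (f : EuclideanSpace ℝ (Fin n) → ℝ) : ℝ≥0∞ :=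
  ⨆ (ε : ℝ) (_ : ε ∈ Set.Ioo (0 : ℝ) (q - 1)),
    (ENNReal.ofReal ε *
      ∫⁻ x in Ω, ENNReal.ofReal |f x| ^ (q - ε) * ENNReal.ofReal (w x * a x ^ ε))
        ^ (1 / (q - ε))

/-- The axis-parallel cube with center `c` and half edge-length `r`. -/
def axisCube {n : ℕ} (c : EuclideanSpace ℝ (Fin n)) (r : ℝ) :
    Set (EuclideanSpace ℝ (Fin n)) :=
  {x | ∀ i, |x i - c i| ≤ r}

/-- The Muckenhoupt class `A_q(ℝⁿ)`:
`sup_Q (fQ w) (fQ w^{−1/(q−1)})^{q−1} < ∞` over axis-parallel cubes `Q`. -/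
def MemAq {n : ℕ} (q : ℝ) (w : EuclideanSpace ℝ (Fin n) → ℝ) : Prop :=
  ∃ C : ℝ≥0∞, C ≠ ⊤ ∧ ∀ (c : EuclideanSpace ℝ (Fin n)) (r : ℝ), 0 < r →
    ((volume (axisCube c r))⁻¹ * ∫⁻ x in axisCube c r, ENNReal.ofReal (w x)) *
      ((volume (axisCube c r))⁻¹ *
        ∫⁻ x in axisCube c r, ENNReal.ofReal (w x ^ (-(1 / (q - 1))))) ^ (q - 1) ≤ C


/-- The Hardy--Littlewood maximal function, with values in `ℝ≥0∞`. -/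
noncomputable def maximalFn {n : ℕ} (g : EuclideanSpace ℝ (Fin n) → ℝ)
    (x : EuclideanSpace ℝ (Fin n)) : ℝ≥0∞ :=
  ⨆ (r : ℝ) (_ : 0 < r),
    (volume (Metric.ball x r))⁻¹ * ∫⁻ y in Metric.ball x r, ENNReal.ofReal |g y|

/-! ### Balls and the Muckenhoupt condition -/

local notation "𝔼" n => EuclideanSpace ℝ (Fin n)

/-- The normalised Lebesgue measure on the closed Euclidean ball `B(c, r)`; integrating against it
is averaging over the ball. -/
noncomputable def ballAvg {n : ℕ} (c : 𝔼 n) (r : ℝ) : Measure (𝔼 n) :=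
  (volume (closedBall c r))⁻¹ • volume.restrict (closedBall c r)

/-- The Muckenhoupt condition with constant `C`, tested on Euclidean balls. -/
def BallAp {n : ℕ} (p : ℝ) (C : ℝ≥0∞) (w : (𝔼 n) → ℝ) : Prop :=
  ∀ (c : 𝔼 n) (r : ℝ), 0 < r →
    (∫⁻ x, ENNReal.ofReal (w x) ∂ballAvg c r) *
      (∫⁻ x, ENNReal.ofReal (w x ^ (-(1 / (p - 1)))) ∂ballAvg c r) ^ (p - 1) ≤ C

lemma vol_pos {n : ℕ} (c : 𝔼 n) {r : ℝ} (hr : 0 < r) : volume (closedBall c r) ≠ 0 :=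
  (measure_closedBall_pos volume c hr).ne'

lemma vol_fin {n : ℕ} (c : 𝔼 n) (r : ℝ) : volume (closedBall c r) ≠ ⊤ :=
  measure_closedBall_lt_top.ne

lemma vol_scale {n : ℕ} (c d : 𝔼 n) {k r : ℝ} (hk : 0 ≤ k) (hr : 0 ≤ r) :
    volume (closedBall c (k * r)) = ENNReal.ofReal (k ^ n) * volume (closedBall d r) := by
  rw [Measure.addHaar_closedBall_mul volume c hk hr, finrank_euclideanSpace_fin,
    Measure.addHaar_closedBall_center volume d]

lemma vol_mono {n : ℕ} (c d : 𝔼 n) {r s : ℝ} (hrs : r ≤ s) :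
    volume (closedBall c r) ≤ volume (closedBall d s) := by
  rw [Measure.addHaar_closedBall_center volume c, Measure.addHaar_closedBall_center volume d]
  exact measure_mono (closedBall_subset_closedBall hrs)

lemma lintegral_ballAvg {n : ℕ} (c : 𝔼 n) (r : ℝ) (f : (𝔼 n) → ℝ≥0∞) :
    ∫⁻ x, f x ∂ballAvg c r = (volume (closedBall c r))⁻¹ * ∫⁻ x in closedBall c r, f x := by
  rw [ballAvg, lintegral_smul_measure, smul_eq_mul]

lemma vol_mul_lintegral_ballAvg {n : ℕ} (c : 𝔼 n) {r : ℝ} (hr : 0 < r) (f : (𝔼 n) → ℝ≥0∞) :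
    volume (closedBall c r) * ∫⁻ x, f x ∂ballAvg c r = ∫⁻ x in closedBall c r, f x := by
  rw [lintegral_ballAvg, ← mul_assoc, ENNReal.mul_inv_cancel (vol_pos c hr) (vol_fin c r), one_mul]

lemma isProb_ballAvg {n : ℕ} (c : 𝔼 n) {r : ℝ} (hr : 0 < r) :
    IsProbabilityMeasure (ballAvg c r) := by
  constructor
  rw [ballAvg, Measure.smul_apply, Measure.restrict_apply_univ, smul_eq_mul,
    ENNReal.inv_mul_cancel (vol_pos c hr) (vol_fin c r)]

/-- An abstract consequence of the Vitali covering lemma: if the measure `ν₁` of every enlarged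
ball is controlled by the measure `ν₂` of the original ball, then `ν₁` of the set of centres is
controlled by the total mass of `ν₂`. -/
lemma vitali_measure_le {n : ℕ} (ν₁ ν₂ : Measure (𝔼 n)) (T : Set (𝔼 n)) (ρ : (𝔼 n) → ℝ) (R : ℝ)
    (hρ : ∀ x ∈ T, 0 < ρ x ∧ ρ x ≤ R)
    (h : ∀ x ∈ T, ν₁ (closedBall x (5 * ρ x)) ≤ ν₂ (closedBall x (ρ x))) :
    ν₁ T ≤ ν₂ univ := by
  obtain ⟨u, huT, hdisj, hcov⟩ := Vitali.exists_disjoint_subfamily_covering_enlargement_closedBall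
    T (fun x => x) ρ R (fun a ha => (hρ a ha).2) 5 (by norm_num)
  have hcount : u.Countable := hdisj.countable_of_nonempty_interior fun i hi =>
    ⟨i, ball_subset_interior_closedBall (mem_ball_self (hρ i (huT hi)).1)⟩
  calc ν₁ T ≤ ν₁ (⋃ b ∈ u, closedBall b (5 * ρ b)) := by
        refine measure_mono fun x hx => ?_
        obtain ⟨b, hb, hsub⟩ := hcov x hx
        exact mem_biUnion hb (hsub (mem_closedBall_self (hρ x hx).1.le))
    _ ≤ ∑' b : u, ν₁ (closedBall (b : 𝔼 n) (5 * ρ b)) := measure_biUnion_le ν₁ hcount _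
    _ ≤ ∑' b : u, ν₂ (closedBall (b : 𝔼 n) (ρ b)) :=
        ENNReal.tsum_le_tsum fun b => h b (huT b.2)
    _ = ν₂ (⋃ b ∈ u, closedBall b (ρ b)) :=
        (measure_biUnion hcount hdisj fun b _ => measurableSet_closedBall).symm
    _ ≤ ν₂ univ := measure_mono (subset_univ _)

lemma closedBall_subset_axisCube {n : ℕ} (c : 𝔼 n) (r : ℝ) : closedBall c r ⊆ axisCube c r := by
  intro x hx i
  have h1 : ‖(x - c) i‖ ≤ ‖x - c‖ := PiLp.norm_apply_le _ i
  rw [mem_closedBall, dist_eq_norm] at hx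
  simpa using h1.trans hx

lemma volume_axisCube {n : ℕ} (c : 𝔼 n) {r : ℝ} (hr : 0 < r) :
    volume (axisCube c r) = ENNReal.ofReal ((2 * r) ^ n) := by
  have h := EuclideanSpace.volume_preserving_symm_measurableEquiv_toLp (Fin n)
  have h2 : axisCube c r = (MeasurableEquiv.toLp 2 (Fin n → ℝ)).symm ⁻¹'
      (closedBall (fun i => c i) r) := by
    ext x
    simp [axisCube, dist_pi_le_iff hr.le, Real.dist_eq]
  rw [h2, h.measure_preimage measurableSet_closedBall.nullMeasurableSet,
    Real.volume_pi_closedBall _ hr.le, Fintype.card_fin]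

/-- Passing from cubes to balls in the Muckenhoupt condition: a ball fills a fixed proportion of
its circumscribed cube. -/
lemma MemAq.ballAp {n : ℕ} {p : ℝ} (hp : 1 < p) {w : (𝔼 n) → ℝ} (h : MemAq p w) :
    ∃ C : ℝ≥0∞, C ≠ ⊤ ∧ BallAp p C w := by
  obtain ⟨C, hC, h⟩ := h
  set κ : ℝ≥0∞ := ENNReal.ofReal (2 ^ n) / volume (ball (0 : 𝔼 n) 1) with hκ
  have hb0 : volume (ball (0 : 𝔼 n) 1) ≠ 0 := (measure_ball_pos volume _ one_pos).ne'
  have hbt : volume (ball (0 : 𝔼 n) 1) ≠ ⊤ := measure_ball_lt_top.ne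
  have hκt : κ ≠ ⊤ := ENNReal.div_ne_top ENNReal.ofReal_ne_top hb0
  have key : ∀ (c : 𝔼 n) (r : ℝ), 0 < r → ∀ f : (𝔼 n) → ℝ≥0∞, ∫⁻ x, f x ∂ballAvg c r ≤
      κ * ((volume (axisCube c r))⁻¹ * ∫⁻ x in axisCube c r, f x) := by
    intro c r hr f
    rw [lintegral_ballAvg, ← mul_assoc]
    gcongr
    · rw [volume_axisCube c hr, Measure.addHaar_closedBall volume c hr.le,
        finrank_euclideanSpace_fin, mul_pow, ENNReal.ofReal_mul (by positivity), hκ,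
        ENNReal.mul_inv (Or.inr ENNReal.ofReal_ne_top) (Or.inl ENNReal.ofReal_ne_top),
        ENNReal.mul_inv (Or.inr hbt) (Or.inl ENNReal.ofReal_ne_top), div_eq_mul_inv]
      have h2 : ENNReal.ofReal ((2 : ℝ) ^ n) * (ENNReal.ofReal ((2 : ℝ) ^ n))⁻¹ = 1 :=
        ENNReal.mul_inv_cancel (by simp) ENNReal.ofReal_ne_top
      calc _ = 1 * ((ENNReal.ofReal (r ^ n))⁻¹ * (volume (ball (0 : 𝔼 n) 1))⁻¹) := by
            rw [one_mul]
        _ ≤ _ := by rw [← h2]; exact le_of_eq (by ring)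
    · exact closedBall_subset_axisCube c r
  refine ⟨κ * κ ^ (p - 1) * C, ?_, fun c r hr => ?_⟩
  · exact ENNReal.mul_ne_top (ENNReal.mul_ne_top hκt
      (ENNReal.rpow_ne_top_of_nonneg (by linarith) hκt)) hC
  · refine (mul_le_mul' (key c r hr _)
      (ENNReal.rpow_le_rpow (key c r hr _) (by linarith : 0 ≤ p - 1))).trans ?_
    rw [ENNReal.mul_rpow_of_nonneg _ _ (by linarith : 0 ≤ p - 1)]
    refine le_trans (le_of_eq ?_) (mul_le_mul' le_rfl (h c r hr))
    ring

/-- By duality, `w ∈ A_p` gives `w ^ (-1 / (p - 1)) ∈ A_{p'}`, where `p' = p / (p - 1)`. -/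
lemma BallAp.dual {n : ℕ} {p : ℝ} (hp : 1 < p) {C : ℝ≥0∞} {w : (𝔼 n) → ℝ} (hw : ∀ x, 0 < w x)
    (h : BallAp p C w) :
    BallAp (p / (p - 1)) (C ^ (1 / (p - 1))) (fun x => w x ^ (-(1 / (p - 1)))) := by
  intro c r hr
  have hp1 : 0 < p - 1 := by linarith
  have e : p / (p - 1) - 1 = 1 / (p - 1) := by field_simp; ring
  have e2 : ∀ x, (w x ^ (-(1 / (p - 1)))) ^ (-(1 / (p / (p - 1) - 1))) = w x := by
    intro x
    rw [e, ← Real.rpow_mul (hw x).le]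
    have : (-(1 / (p - 1))) * (-(1 / (1 / (p - 1)))) = 1 := by field_simp
    rw [this, Real.rpow_one]
  simp only [e2]
  rw [e]
  have := ENNReal.rpow_le_rpow (h c r hr) (by positivity : 0 ≤ 1 / (p - 1))
  rw [ENNReal.mul_rpow_of_nonneg _ _ (by positivity), ← ENNReal.rpow_mul,
    mul_one_div_cancel hp1.ne', ENNReal.rpow_one] at this
  rwa [mul_comm]

lemma lintegral_ofReal_pos {n : ℕ} {w : (𝔼 n) → ℝ} (hm : Measurable w) (hw : ∀ x, 0 < w x)
    (μ : Measure (𝔼 n)) (hμ : μ ≠ 0) : 0 < ∫⁻ x, ENNReal.ofReal (w x) ∂μ := by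
  rw [lintegral_pos_iff_support hm.ennreal_ofReal]
  have : Function.support (fun x => ENNReal.ofReal (w x)) = univ := by
    ext x; simp [hw x]
  rw [this]
  simpa [pos_iff_ne_zero] using hμ

/-- The averages of an `A_p` weight are finite, since those of its dual weight do not vanish. -/
lemma BallAp.avg_ne_top {n : ℕ} {p : ℝ} {C : ℝ≥0∞} (hC : C ≠ ⊤) {w : (𝔼 n) → ℝ}
    (hm : Measurable w) (hw : ∀ x, 0 < w x) (hp : 1 < p) (h : BallAp p C w) (c : 𝔼 n) {r : ℝ}
    (hr : 0 < r) : ∫⁻ x, ENNReal.ofReal (w x) ∂ballAvg c r ≠ ⊤ := by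
  intro htop
  have := isProb_ballAvg c hr
  have hpos := lintegral_ofReal_pos (w := fun x => w x ^ (-(1 / (p - 1))))
    (hm.pow_const _) (fun x => Real.rpow_pos_of_pos (hw x) _) (ballAvg c r)
    (IsProbabilityMeasure.ne_zero _)
  have h1 := h c r hr
  rw [htop, ENNReal.top_mul] at h1
  · exact hC (top_le_iff.mp h1)
  · exact fun h0 => by
      rcases ENNReal.rpow_eq_zero_iff.mp h0 with ⟨h2, _⟩ | ⟨_, h2⟩
      · exact hpos.ne' h2
      · linarith

/-- Averages of `G` over a ball are controlled by its weighted `p`-means over the same ball. -/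
lemma BallAp.avg_pow_le {n : ℕ} {p : ℝ} {C : ℝ≥0∞} {w : (𝔼 n) → ℝ}
    (hm : Measurable w) (hw : ∀ x, 0 < w x) (hp : 1 < p) (h : BallAp p C w)
    {G : (𝔼 n) → ℝ≥0∞} (hG : Measurable G) (c : 𝔼 n) {r : ℝ} (hr : 0 < r) :
    (∫⁻ x, G x ∂ballAvg c r) ^ p * ∫⁻ x in closedBall c r, ENNReal.ofReal (w x) ≤
      C * ∫⁻ x in closedBall c r, G x ^ p * ENNReal.ofReal (w x) := by
  have hp0 : 0 < p := by linarith
  have hp1 : 0 < p - 1 := by linarith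
  have e : ∀ x, G x = (G x ^ p * ENNReal.ofReal (w x)) ^ (1 / p) *
      ENNReal.ofReal (w x ^ (-(1 / (p - 1)))) ^ (1 - 1 / p) := by
    intro x
    have h0 : ENNReal.ofReal (w x) ≠ 0 := by simpa using hw x
    rw [ENNReal.mul_rpow_of_nonneg _ _ (by positivity), ← ENNReal.rpow_mul,
      mul_one_div_cancel hp0.ne', ENNReal.rpow_one, ← ENNReal.ofReal_rpow_of_pos (hw x),
      ← ENNReal.rpow_mul, mul_assoc, ← ENNReal.rpow_add _ _ h0 ENNReal.ofReal_ne_top]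
    have : 1 / p + -(1 / (p - 1)) * (1 - 1 / p) = 0 := by field_simp; ring
    rw [this, ENNReal.rpow_zero, mul_one]
  have hH : (∫⁻ x, G x ∂ballAvg c r) ^ p ≤
      (∫⁻ x, G x ^ p * ENNReal.ofReal (w x) ∂ballAvg c r) *
        (∫⁻ x, ENNReal.ofReal (w x ^ (-(1 / (p - 1)))) ∂ballAvg c r) ^ (p - 1) := by
    have := ENNReal.lintegral_mul_norm_pow_le (μ := ballAvg c r)
      (f := fun x => G x ^ p * ENNReal.ofReal (w x))
      (g := fun x => ENNReal.ofReal (w x ^ (-(1 / (p - 1)))))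
      ((hG.pow_const _).mul hm.ennreal_ofReal).aemeasurable
      (hm.pow_const _).ennreal_ofReal.aemeasurable
      (p := 1 / p) (q := 1 - 1 / p) (by positivity)
      (by rw [sub_nonneg, div_le_one hp0]; exact hp.le) (by ring)
    rw [lintegral_congr fun x => (e x).symm] at this
    refine (ENNReal.rpow_le_rpow this hp0.le).trans (le_of_eq ?_)
    rw [ENNReal.mul_rpow_of_nonneg _ _ hp0.le, ← ENNReal.rpow_mul, ← ENNReal.rpow_mul,
      one_div_mul_cancel hp0.ne', ENNReal.rpow_one]
    congr 2
    field_simp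
  rw [← vol_mul_lintegral_ballAvg c hr (fun x => ENNReal.ofReal (w x)),
    ← vol_mul_lintegral_ballAvg c hr (fun x => G x ^ p * ENNReal.ofReal (w x))]
  calc _ ≤ ((∫⁻ x, G x ^ p * ENNReal.ofReal (w x) ∂ballAvg c r) *
        (∫⁻ x, ENNReal.ofReal (w x ^ (-(1 / (p - 1)))) ∂ballAvg c r) ^ (p - 1)) *
        (volume (closedBall c r) * ∫⁻ x, ENNReal.ofReal (w x) ∂ballAvg c r) := by gcongr
    _ = ((∫⁻ x, ENNReal.ofReal (w x) ∂ballAvg c r) *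
      (∫⁻ x, ENNReal.ofReal (w x ^ (-(1 / (p - 1)))) ∂ballAvg c r) ^ (p - 1)) *
      (volume (closedBall c r) * ∫⁻ x, G x ^ p * ENNReal.ofReal (w x) ∂ballAvg c r) := by ring
    _ ≤ _ := by gcongr; exact h c r hr

/-- Muckenhoupt weights are doubling. -/
lemma BallAp.doubling {n : ℕ} {p : ℝ} {C : ℝ≥0∞} {w : (𝔼 n) → ℝ}
    (hm : Measurable w) (hw : ∀ x, 0 < w x) (hp : 1 < p) (h : BallAp p C w)
    (c : 𝔼 n) {r : ℝ} (hr : 0 < r) :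
    ∫⁻ x in closedBall c (5 * r), ENNReal.ofReal (w x) ≤
      ENNReal.ofReal (5 ^ n) ^ p * C * ∫⁻ x in closedBall c r, ENNReal.ofReal (w x) := by
  have hp0 : 0 < p := by linarith
  have hsub : closedBall c r ⊆ closedBall c (5 * r) :=
    closedBall_subset_closedBall (by linarith)
  have h1 := h.avg_pow_le hm hw hp (G := (closedBall c r).indicator 1)
    (measurable_one.indicator measurableSet_closedBall) c (r := 5 * r) (by linarith)
  have e1 : ∫⁻ x, (closedBall c r).indicator 1 x ∂ballAvg c (5 * r) =
      (ENNReal.ofReal (5 ^ n))⁻¹ := by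
    rw [lintegral_ballAvg, lintegral_indicator_one measurableSet_closedBall,
      Measure.restrict_apply measurableSet_closedBall, inter_eq_left.mpr hsub,
      vol_scale c c (by norm_num) hr.le, ENNReal.mul_inv (Or.inr (vol_fin c r))
        (Or.inl ENNReal.ofReal_ne_top), mul_assoc, ENNReal.inv_mul_cancel (vol_pos c hr)
        (vol_fin c r), mul_one]
  have e2 : ∫⁻ x in closedBall c (5 * r), (closedBall c r).indicator 1 x ^ p *
      ENNReal.ofReal (w x) = ∫⁻ x in closedBall c r, ENNReal.ofReal (w x) := by
    have : ∀ x, ((closedBall c r).indicator 1 x : ℝ≥0∞) ^ p * ENNReal.ofReal (w x) =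
        (closedBall c r).indicator (fun x => ENNReal.ofReal (w x)) x := by
      intro x
      by_cases hx : x ∈ closedBall c r
      · simp only [indicator_of_mem hx, Pi.one_apply, ENNReal.one_rpow, one_mul]
      · simp only [indicator_of_notMem hx, ENNReal.zero_rpow_of_pos hp0, zero_mul]
    rw [lintegral_congr this, lintegral_indicator measurableSet_closedBall,
      Measure.restrict_restrict measurableSet_closedBall, inter_eq_left.mpr hsub]
  rw [e1, e2] at h1
  have hk0 : ENNReal.ofReal ((5 : ℝ) ^ n) ^ p ≠ 0 := by
    simp [ENNReal.rpow_eq_zero_iff]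
  have hkt : ENNReal.ofReal ((5 : ℝ) ^ n) ^ p ≠ ⊤ :=
    ENNReal.rpow_ne_top_of_nonneg hp0.le ENNReal.ofReal_ne_top
  calc _ = ENNReal.ofReal (5 ^ n) ^ p * ((ENNReal.ofReal (5 ^ n))⁻¹ ^ p *
        ∫⁻ x in closedBall c (5 * r), ENNReal.ofReal (w x)) := by
        rw [ENNReal.inv_rpow, ← mul_assoc, ENNReal.mul_inv_cancel hk0 hkt, one_mul]
    _ ≤ _ := by rw [mul_assoc]; gcongr

/-! ### Weighted estimates for the maximal operator -/

lemma vol_ball_eq {n : ℕ} (x : 𝔼 n) {r : ℝ} (hr : 0 < r) :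
    volume (ball x r) = volume (closedBall x r) := by
  rw [Measure.addHaar_closedBall volume x hr.le, Measure.addHaar_ball_of_pos volume x hr]

lemma measurable_maximalFn {n : ℕ} (g : (𝔼 n) → ℝ) :
    Measurable (maximalFn g) := by
  -- The maximal function is lower semicontinuous: shrinking a ball slightly leaves room to move
  -- its centre.
  refine LowerSemicontinuous.measurable (lowerSemicontinuous_iff_isOpen_preimage.mpr fun t => ?_)
  rw [Metric.isOpen_iff]
  intro x hx
  simp only [mem_preimage, mem_Ioi, maximalFn, lt_iSup_iff] at hx
  obtain ⟨r, hr, hx⟩ := hx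
  set μ := volume.withDensity fun y => ENNReal.ofReal |g y| with hμ
  have hUn : ball x r = ⋃ k : ℕ, ball x (r - 1 / ((k : ℝ) + 1)) := by
    ext y
    simp only [mem_ball, mem_iUnion]
    constructor
    · intro hy
      obtain ⟨k, hk⟩ := exists_nat_one_div_lt (sub_pos.mpr hy)
      exact ⟨k, by linarith⟩
    · rintro ⟨k, hk⟩
      have : (0 : ℝ) < 1 / ((k : ℝ) + 1) := by positivity
      linarith
  have hmono : Monotone fun k : ℕ => ball x (r - 1 / ((k : ℝ) + 1)) := by
    intro k l hkl
    refine ball_subset_ball ?_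
    have : (1 : ℝ) / ((l : ℝ) + 1) ≤ 1 / ((k : ℝ) + 1) := by gcongr
    linarith
  have hsup : μ (ball x r) = ⨆ k : ℕ, μ (ball x (r - 1 / ((k : ℝ) + 1))) := by
    rw [hUn]; exact hmono.directed_le.measure_iUnion
  rw [← withDensity_apply _ measurableSet_ball, ← hμ, hsup, ENNReal.mul_iSup] at hx
  obtain ⟨k, hk⟩ := lt_iSup_iff.mp hx
  refine ⟨1 / ((k : ℝ) + 1), by positivity, fun y hy => ?_⟩
  simp only [mem_preimage, mem_Ioi, maximalFn, lt_iSup_iff]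
  refine ⟨r, hr, hk.trans_le ?_⟩
  rw [← withDensity_apply _ measurableSet_ball, ← hμ, vol_ball_eq x hr, vol_ball_eq y hr,
    Measure.addHaar_closedBall_center volume x, Measure.addHaar_closedBall_center volume y]
  gcongr
  refine ball_subset_ball' ?_
  rw [mem_ball, dist_comm] at hy
  linarith

/-- Weak-type estimate: the weighted measure of a level set of the maximal function is controlled
by the part of `g` above half the level. -/
lemma BallAp.weak_type {n : ℕ} {p : ℝ} {C : ℝ≥0∞} {w : (𝔼 n) → ℝ}
    (hm : Measurable w) (hw : ∀ x, 0 < w x) (hp : 1 < p) (h : BallAp p C w)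
    {g : (𝔼 n) → ℝ} (hg : Measurable g) {t : ℝ} (ht : 0 < t) :
    (volume.withDensity fun x => ENNReal.ofReal (w x)) {x | ENNReal.ofReal t < maximalFn g x} ≤
      ENNReal.ofReal (5 ^ n) ^ p * C * C * ENNReal.ofReal (2 / t) ^ p *
        ∫⁻ x in {x | t < 2 * |g x|}, ENNReal.ofReal |g x| ^ p * ENNReal.ofReal (w x) := by
  have hp0 : 0 < p := by linarith
  set S := {x | t < 2 * |g x|} with hS
  have hSm : MeasurableSet S := measurableSet_lt measurable_const (by fun_prop)
  set G : (𝔼 n) → ℝ≥0∞ := S.indicator fun x => ENNReal.ofReal |g x| with hGdef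
  have hGm : Measurable G := Measurable.indicator (by fun_prop) hSm
  have hgG : ∀ x, ENNReal.ofReal |g x| ≤ G x + ENNReal.ofReal (t / 2) := by
    intro x
    by_cases hx : x ∈ S
    · simp [hGdef, hx]
    · have : |g x| ≤ t / 2 := by
        simp only [hS, mem_ofPred_eq, not_lt] at hx; linarith
      exact le_add_left (ENNReal.ofReal_le_ofReal this)
  have hGp : ∀ x, G x ^ p * ENNReal.ofReal (w x) =
      S.indicator (fun x => ENNReal.ofReal |g x| ^ p * ENNReal.ofReal (w x)) x := by
    intro x
    by_cases hx : x ∈ S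
    · simp [hGdef, hx]
    · simp [hGdef, hx, hp0]
  set A := ENNReal.ofReal (5 ^ n) ^ p * C * C * ENNReal.ofReal (2 / t) ^ p with hA
  set ν₁ := volume.withDensity fun x => ENNReal.ofReal (w x) with hν₁
  set ν₂ := A • volume.withDensity fun x => G x ^ p * ENNReal.ofReal (w x) with hν₂
  have ht2 : ENNReal.ofReal (t / 2) * ENNReal.ofReal (2 / t) = 1 := by
    rw [← ENNReal.ofReal_mul (by positivity)]
    have : t / 2 * (2 / t) = 1 := by field_simp
    simp [this]
  -- The estimate on a single ball over which `|g|` has average greater than `t`.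
  have key : ∀ (x : 𝔼 n) (r : ℝ), 0 < r →
      ENNReal.ofReal t < (volume (ball x r))⁻¹ * ∫⁻ y in ball x r, ENNReal.ofReal |g y| →
      ν₁ (closedBall x (5 * r)) ≤ ν₂ (closedBall x r) := by
    intro x r hr hav
    have h1 : ENNReal.ofReal t < ∫⁻ y, ENNReal.ofReal |g y| ∂ballAvg x r := by
      refine hav.trans_le ?_
      rw [lintegral_ballAvg, vol_ball_eq x hr]
      gcongr
      exact ball_subset_closedBall
    have h2 : ENNReal.ofReal (t / 2) ≤ ∫⁻ y, G y ∂ballAvg x r := by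
      have := isProb_ballAvg x hr
      have h3 : ∫⁻ y, ENNReal.ofReal |g y| ∂ballAvg x r ≤
          ∫⁻ y, G y ∂ballAvg x r + ENNReal.ofReal (t / 2) := by
        refine (lintegral_mono hgG).trans (le_of_eq ?_)
        rw [lintegral_add_right _ measurable_const, lintegral_const, measure_univ, mul_one]
      have h4 : ENNReal.ofReal (t / 2) + ENNReal.ofReal (t / 2) ≤
          ∫⁻ y, G y ∂ballAvg x r + ENNReal.ofReal (t / 2) := by
        rw [← ENNReal.ofReal_add (by positivity) (by positivity), add_halves]
        exact h1.le.trans h3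
      exact (ENNReal.add_le_add_iff_right ENNReal.ofReal_ne_top).mp h4
    have h5 := h.avg_pow_le hm hw hp hGm x hr
    rw [hν₁, hν₂, Measure.smul_apply, withDensity_apply _ measurableSet_closedBall,
      withDensity_apply _ measurableSet_closedBall, smul_eq_mul]
    calc _ ≤ ENNReal.ofReal (5 ^ n) ^ p * C * ∫⁻ x in closedBall x r, ENNReal.ofReal (w x) :=
          h.doubling hm hw hp x hr
      _ = ENNReal.ofReal (5 ^ n) ^ p * C * ENNReal.ofReal (2 / t) ^ p *
          (ENNReal.ofReal (t / 2) ^ p * ∫⁻ x in closedBall x r, ENNReal.ofReal (w x)) := by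
          have : ENNReal.ofReal (2 / t) ^ p * ENNReal.ofReal (t / 2) ^ p = 1 := by
            rw [← ENNReal.mul_rpow_of_nonneg _ _ hp0.le, mul_comm, ht2, ENNReal.one_rpow]
          rw [mul_assoc _ (ENNReal.ofReal (2 / t) ^ p), ← mul_assoc (ENNReal.ofReal (2 / t) ^ p),
            this, one_mul]
      _ ≤ ENNReal.ofReal (5 ^ n) ^ p * C * ENNReal.ofReal (2 / t) ^ p *
          ((∫⁻ y, G y ∂ballAvg x r) ^ p * ∫⁻ x in closedBall x r, ENNReal.ofReal (w x)) := by
          gcongr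
      _ ≤ ENNReal.ofReal (5 ^ n) ^ p * C * ENNReal.ofReal (2 / t) ^ p *
          (C * ∫⁻ x in closedBall x r, G x ^ p * ENNReal.ofReal (w x)) := by
          gcongr
      _ = _ := by rw [hA]; ring
  have htot : ν₂ univ = A * ∫⁻ x in S, ENNReal.ofReal |g x| ^ p * ENNReal.ofReal (w x) := by
    rw [hν₂, Measure.smul_apply, withDensity_apply _ MeasurableSet.univ, smul_eq_mul,
      Measure.restrict_univ, lintegral_congr hGp, lintegral_indicator hSm]
  rw [← htot]
  -- The covering lemma needs bounded radii, so the level set is exhausted.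
  set T : ℕ → Set (𝔼 n) := fun k => {x | ∃ r : ℝ, (0 < r ∧ r ≤ k) ∧
    ENNReal.ofReal t < (volume (ball x r))⁻¹ * ∫⁻ y in ball x r, ENNReal.ofReal |g y|} with hT
  have hcov : {x | ENNReal.ofReal t < maximalFn g x} ⊆ ⋃ k, T k := by
    intro x hx
    simp only [maximalFn, lt_iSup_iff, mem_ofPred_eq] at hx
    obtain ⟨r, hr, hx⟩ := hx
    obtain ⟨k, hk⟩ := exists_nat_ge r
    exact mem_iUnion.mpr ⟨k, r, ⟨hr, hk⟩, hx⟩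
  have hmono : Monotone T := by
    rintro k l hkl x ⟨r, ⟨hr, hrk⟩, hx⟩
    exact ⟨r, ⟨hr, hrk.trans (by exact_mod_cast hkl)⟩, hx⟩
  refine (measure_mono hcov).trans ?_
  rw [hmono.directed_le.measure_iUnion]
  refine iSup_le fun k => ?_
  have hch : ∀ x : 𝔼 n, ∃ r : ℝ, x ∈ T k → (0 < r ∧ r ≤ k) ∧
      ENNReal.ofReal t < (volume (ball x r))⁻¹ * ∫⁻ y in ball x r, ENNReal.ofReal |g y| := by
    intro x
    by_cases hx : x ∈ T k
    · obtain ⟨r, hr⟩ := hx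
      exact ⟨r, fun _ => hr⟩
    · exact ⟨0, fun hx' => absurd hx' hx⟩
  choose ρ hρ using hch
  exact vitali_measure_le ν₁ ν₂ (T k) ρ k (fun x hx => (hρ x hx).1)
    fun x hx => key x (ρ x) (hρ x hx).1.1 (hρ x hx).2

/-- Strong-type estimate, by integrating the weak-type estimate over all levels. The constant is
explicit so that it can be bounded uniformly as `w`, `p` and `p₀` vary. -/
lemma BallAp.strong_type {n : ℕ} {p₀ p : ℝ} {C : ℝ≥0∞} {w : (𝔼 n) → ℝ}
    (hm : Measurable w) (hw : ∀ x, 0 < w x) (hp₀ : 1 < p₀) (hp : p₀ < p) (hC : C ≠ ⊤)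
    (h : BallAp p₀ C w) {g : (𝔼 n) → ℝ} (hg : Measurable g) :
    ∫⁻ x, ENNReal.ofReal |(maximalFn g x).toReal| ^ p * ENNReal.ofReal (w x) ≤
      ENNReal.ofReal (5 ^ n) ^ p₀ * C * C * ENNReal.ofReal (2 ^ p * (p / (p - p₀))) *
        ∫⁻ x, ENNReal.ofReal |g x| ^ p * ENNReal.ofReal (w x) := by
  have hp0 : 0 < p := by linarith
  have hW : Measurable fun x => ENNReal.ofReal (w x) := hm.ennreal_ofReal
  set ν := volume.withDensity fun x => ENNReal.ofReal (w x) with hν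
  set B := ENNReal.ofReal (5 ^ n) ^ p₀ * C * C with hB
  set η := volume.withDensity fun x => ENNReal.ofReal |g x| ^ p₀ * ENNReal.ofReal (w x) with hη
  have hHm : Measurable fun x => ENNReal.ofReal |g x| ^ p₀ * ENNReal.ofReal (w x) := by fun_prop
  have hF : Measurable fun x => (maximalFn g x).toReal := (measurable_maximalFn g).ennreal_toReal
  have e1 : ∫⁻ x, ENNReal.ofReal |(maximalFn g x).toReal| ^ p * ENNReal.ofReal (w x) =
      ∫⁻ x, ENNReal.ofReal ((maximalFn g x).toReal ^ p) ∂ν := by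
    rw [hν, lintegral_withDensity_eq_lintegral_mul _ hW (by fun_prop)]
    refine lintegral_congr fun x => ?_
    rw [abs_of_nonneg ENNReal.toReal_nonneg, ENNReal.ofReal_rpow_of_nonneg
      ENNReal.toReal_nonneg hp0.le, Pi.mul_apply, mul_comm]
  have e2 : ∫⁻ x, ENNReal.ofReal ((2 * |g x|) ^ (p - p₀)) ∂η =
      ENNReal.ofReal (2 ^ (p - p₀)) * ∫⁻ x, ENNReal.ofReal |g x| ^ p * ENNReal.ofReal (w x) := by
    rw [hη, lintegral_withDensity_eq_lintegral_mul _ hHm (by fun_prop),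
      ← lintegral_const_mul _ (by fun_prop)]
    refine lintegral_congr fun x => ?_
    have h1 : p = p₀ + (p - p₀) := by ring
    rw [Pi.mul_apply, Real.mul_rpow (by norm_num) (abs_nonneg _),
      ENNReal.ofReal_mul (by positivity),
      ← ENNReal.ofReal_rpow_of_nonneg (abs_nonneg (g x)) (by linarith : 0 ≤ p - p₀)]
    conv_rhs => rw [h1, ENNReal.rpow_add_of_nonneg _ _ (by linarith) (by linarith)]
    rw [show p₀ + (p - p₀) - p₀ = p - p₀ by ring]
    ring
  have l2 := lintegral_rpow_eq_lintegral_meas_lt_mul η (f := fun x => 2 * |g x|)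
    (Filter.Eventually.of_forall fun x => by positivity) (by fun_prop)
    (p := p - p₀) (by linarith)
  rw [e1, lintegral_rpow_eq_lintegral_meas_lt_mul ν
    (Filter.Eventually.of_forall fun x => ENNReal.toReal_nonneg) hF.aemeasurable hp0]
  have step : ∀ t ∈ Ioi (0 : ℝ), ν {a | t < (maximalFn g a).toReal} * ENNReal.ofReal (t ^ (p - 1)) ≤
      B * ENNReal.ofReal (2 ^ p₀) *
        (η {a | t < 2 * |g a|} * ENNReal.ofReal (t ^ (p - p₀ - 1))) := by
    intro t ht
    have ht : 0 < t := ht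
    have hsub : {a | t < (maximalFn g a).toReal} ⊆ {a | ENNReal.ofReal t < maximalFn g a} := by
      intro a ha
      exact ENNReal.ofReal_lt_iff_lt_toReal ht.le (fun htop => by
        simp only [mem_ofPred_eq, htop, ENNReal.toReal_top] at ha; linarith) |>.mpr ha
    have hSm : MeasurableSet {x | t < 2 * |g x|} :=
      measurableSet_lt measurable_const (by fun_prop)
    calc _ ≤ (B * ENNReal.ofReal (2 / t) ^ p₀ * η {x | t < 2 * |g x|}) *
          ENNReal.ofReal (t ^ (p - 1)) := by
          gcongr
          refine (measure_mono hsub).trans ?_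
          rw [hη, withDensity_apply _ hSm]
          exact h.weak_type hm hw hp₀ hg ht
      _ = _ := by
          have : ENNReal.ofReal (2 / t) ^ p₀ * ENNReal.ofReal (t ^ (p - 1)) =
              ENNReal.ofReal (2 ^ p₀) * ENNReal.ofReal (t ^ (p - p₀ - 1)) := by
            rw [ENNReal.ofReal_rpow_of_pos (by positivity), ← ENNReal.ofReal_mul (by positivity),
              ← ENNReal.ofReal_mul (by positivity)]
            congr 1
            rw [Real.div_rpow (by norm_num) ht.le, show p - 1 = p₀ + (p - p₀ - 1) by ring,
              Real.rpow_add ht]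
            field_simp
          calc _ = B * (ENNReal.ofReal (2 / t) ^ p₀ * ENNReal.ofReal (t ^ (p - 1))) *
                η {x | t < 2 * |g x|} := by ring
            _ = _ := by rw [this]; ring
  have hBt : B * ENNReal.ofReal (2 ^ p₀) ≠ ⊤ :=
    ENNReal.mul_ne_top (ENNReal.mul_ne_top (ENNReal.mul_ne_top
      (ENNReal.rpow_ne_top_of_nonneg (by linarith) ENNReal.ofReal_ne_top) hC) hC)
      ENNReal.ofReal_ne_top
  have hpp : 0 < p - p₀ := by linarith
  have hinv : ENNReal.ofReal (1 / (p - p₀)) * ENNReal.ofReal (p - p₀) = 1 := by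
    rw [← ENNReal.ofReal_mul (by positivity), one_div_mul_cancel hpp.ne', ENNReal.ofReal_one]
  have hconst : ENNReal.ofReal (2 ^ p * (p / (p - p₀))) = ENNReal.ofReal p *
      ENNReal.ofReal (2 ^ p₀) * ENNReal.ofReal (1 / (p - p₀)) * ENNReal.ofReal (2 ^ (p - p₀)) := by
    rw [← ENNReal.ofReal_mul (by positivity), ← ENNReal.ofReal_mul (by positivity),
      ← ENNReal.ofReal_mul (by positivity)]
    congr 1
    rw [Real.rpow_sub (by norm_num)]
    have : (2 : ℝ) ^ p₀ ≠ 0 := by positivity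
    field_simp
  rw [e2] at l2
  calc _ ≤ ENNReal.ofReal p * ∫⁻ t in Ioi (0 : ℝ), B * ENNReal.ofReal (2 ^ p₀) *
        (η {a | t < 2 * |g a|} * ENNReal.ofReal (t ^ (p - p₀ - 1))) := by
        gcongr 1
        exact setLIntegral_mono' measurableSet_Ioi step
    _ = B * ENNReal.ofReal p * ENNReal.ofReal (2 ^ p₀) *
        ∫⁻ t in Ioi (0 : ℝ), η {a | t < 2 * |g a|} * ENNReal.ofReal (t ^ (p - p₀ - 1)) := by
        rw [lintegral_const_mul' _ _ hBt]
        ring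
    _ = B * ENNReal.ofReal p * ENNReal.ofReal (2 ^ p₀) * (ENNReal.ofReal (1 / (p - p₀)) *
        (ENNReal.ofReal (2 ^ (p - p₀)) *
          ∫⁻ x, ENNReal.ofReal |g x| ^ p * ENNReal.ofReal (w x))) := by
        rw [l2, ← mul_assoc (ENNReal.ofReal (1 / (p - p₀))), hinv, one_mul]
    _ = _ := by rw [hconst]; ring

/-! ### The reverse Hölder inequality -/

/-- A ball centred in `B(c, R)` of radius at most `R` has a fixed proportion of its volume inside
`B(c, R)`: it contains a ball of half its radius, obtained by moving the centre towards `c`. -/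
lemma ballAvg_inter_lower {n : ℕ} {c x : 𝔼 n} {R r : ℝ} (hr : 0 < r) (hrR : r ≤ R)
    (hx : x ∈ closedBall c R) : ENNReal.ofReal ((1 / 2) ^ n) ≤ ballAvg x r (closedBall c R) := by
  have hR : 0 < R := hr.trans_le hrR
  set s := r / (2 * R) with hs
  have hs0 : 0 ≤ s := by positivity
  have hs1 : s ≤ 1 := by rw [hs, div_le_one (by positivity)]; linarith
  have hsR : s * R = r / 2 := by rw [hs]; field_simp
  set y := x + s • (c - x) with hy
  have hxc : ‖x - c‖ ≤ R := by rwa [mem_closedBall, dist_eq_norm] at hx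
  have hyx : dist y x ≤ r / 2 := by
    rw [dist_eq_norm, hy, add_sub_cancel_left, norm_smul, Real.norm_of_nonneg hs0, norm_sub_rev]
    calc s * ‖x - c‖ ≤ s * R := by gcongr
      _ = r / 2 := hsR
  have hyc : dist y c ≤ R - r / 2 := by
    have : y - c = (1 - s) • (x - c) := by rw [hy]; module
    rw [dist_eq_norm, this, norm_smul, Real.norm_of_nonneg (by linarith)]
    calc (1 - s) * ‖x - c‖ ≤ (1 - s) * R := by gcongr
      _ = R - r / 2 := by rw [← hsR]; ring
  have hsub : closedBall y (1 / 2 * r) ⊆ closedBall c R ∩ closedBall x r :=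
    subset_inter (closedBall_subset_closedBall' (by linarith))
      (closedBall_subset_closedBall' (by linarith))
  rw [ballAvg, Measure.smul_apply, Measure.restrict_apply measurableSet_closedBall, smul_eq_mul]
  calc ENNReal.ofReal ((1 / 2) ^ n)
      = (volume (closedBall x r))⁻¹ * volume (closedBall y (1 / 2 * r)) := by
        rw [vol_scale y x (by norm_num) hr.le, mul_left_comm, ENNReal.inv_mul_cancel (vol_pos x hr)
          (vol_fin x r), mul_one]
    _ ≤ _ := by gcongr

/-- On a ball whose average of `w` exceeds `t`, an `A_p` weight `w` can be much smaller than `t`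
only on a small proportion of the ball. -/
lemma BallAp.small_part {n : ℕ} {p : ℝ} {C : ℝ≥0∞} {w : (𝔼 n) → ℝ}
    (hm : Measurable w) (hw : ∀ x, 0 < w x) (hp : 1 < p) (h : BallAp p C w)
    {β κ : ℝ} (hβ : 0 < β) (hκ : 0 < κ) (hβκ : C * ENNReal.ofReal β ≤ ENNReal.ofReal (κ ^ (p - 1)))
    {t : ℝ} (ht : 0 < t) (x : 𝔼 n) {r : ℝ} (hr : 0 < r)
    (hav : ENNReal.ofReal t ≤ ∫⁻ y, ENNReal.ofReal (w y) ∂ballAvg x r) :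
    ballAvg x r {y | w y ≤ β * t} ≤ ENNReal.ofReal κ := by
  have hp1 : 0 < p - 1 := by linarith
  have hEm : MeasurableSet {y | w y ≤ β * t} := measurableSet_le hm measurable_const
  set E := {y | w y ≤ β * t} with hE
  have h1 : ENNReal.ofReal ((β * t) ^ (-(1 / (p - 1)))) * ballAvg x r E ≤
      ∫⁻ y, ENNReal.ofReal (w y ^ (-(1 / (p - 1)))) ∂ballAvg x r := by
    rw [← setLIntegral_const]
    refine (setLIntegral_mono' hEm fun y hy => ?_).trans (setLIntegral_le_lintegral E _)
    refine ENNReal.ofReal_le_ofReal ?_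
    exact Real.rpow_le_rpow_of_nonpos (hw y) hy (by rw [neg_nonpos]; positivity)
  have h2 := ENNReal.rpow_le_rpow h1 hp1.le
  rw [ENNReal.mul_rpow_of_nonneg _ _ hp1.le, ENNReal.ofReal_rpow_of_pos (by positivity),
    ← Real.rpow_mul (by positivity), show -(1 / (p - 1)) * (p - 1) = -1 by field_simp] at h2
  have h3 : ENNReal.ofReal t * (ENNReal.ofReal ((β * t) ^ (-1 : ℝ)) * ballAvg x r E ^ (p - 1)) ≤ C :=
    (mul_le_mul' hav h2).trans (h x r hr)
  have h4 : ballAvg x r E ^ (p - 1) ≤ ENNReal.ofReal κ ^ (p - 1) := by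
    rw [ENNReal.ofReal_rpow_of_pos hκ]
    refine le_trans ?_ hβκ
    have e : ENNReal.ofReal t * ENNReal.ofReal ((β * t) ^ (-1 : ℝ)) * ENNReal.ofReal β = 1 := by
      rw [← ENNReal.ofReal_mul ht.le, ← ENNReal.ofReal_mul (by positivity), Real.rpow_neg_one]
      have : t * (β * t)⁻¹ * β = 1 := by field_simp
      rw [this, ENNReal.ofReal_one]
    calc _ = (ENNReal.ofReal t * ENNReal.ofReal ((β * t) ^ (-1 : ℝ)) * ENNReal.ofReal β) *
          ballAvg x r E ^ (p - 1) := by rw [e, one_mul]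
      _ = (ENNReal.ofReal t * (ENNReal.ofReal ((β * t) ^ (-1 : ℝ)) * ballAvg x r E ^ (p - 1))) *
          ENNReal.ofReal β := by ring
      _ ≤ _ := by gcongr
  exact (ENNReal.rpow_le_rpow_iff hp1).mp h4

/-- Level-set form of the self-improvement of `A_p` weights: above its average over a ball, the
mass of the weight in a superlevel set is controlled by the volume of a lower superlevel set. -/
lemma BallAp.level_set {n : ℕ} {p : ℝ} {C : ℝ≥0∞} {w : (𝔼 n) → ℝ}
    (hm : Measurable w) (hw : ∀ x, 0 < w x) (hp : 1 < p) (hC : C ≠ ⊤) (h : BallAp p C w)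
    {β : ℝ} (hβ : 0 < β)
    (hβκ : C * ENNReal.ofReal β ≤ ENNReal.ofReal (((1 / 2) ^ (n + 1)) ^ (p - 1)))
    (c : 𝔼 n) {R : ℝ} (hR : 0 < R) {t : ℝ} (ht : 0 < t)
    (hav : ∫⁻ y, ENNReal.ofReal (w y) ∂ballAvg c R ≤ ENNReal.ofReal t) :
    ((volume.restrict (closedBall c R)).withDensity fun x => ENNReal.ofReal (w x)) {x | t < w x} ≤
      ENNReal.ofReal (5 ^ n * 2 ^ (n + 1) * t) *
        volume.restrict (closedBall c R) {x | β * t < w x} := by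
  set B := closedBall c R with hB
  have hBm : MeasurableSet B := measurableSet_closedBall
  set η := (volume.restrict B).withDensity fun x => ENNReal.ofReal (w x) with hη
  have hSm : MeasurableSet {x | β * t < w x} := measurableSet_lt measurable_const hm
  set S := {x | β * t < w x} with hS
  set K := ENNReal.ofReal (5 ^ n * 2 ^ (n + 1) * t) with hK
  set ν₂ := K • volume.restrict (B ∩ S) with hν₂
  have htot : ν₂ univ = K * volume.restrict B S := by
    rw [hν₂, Measure.smul_apply, Measure.restrict_apply_univ, smul_eq_mul,
      Measure.restrict_apply hSm, inter_comm]
  have hηball : ∀ (x : 𝔼 n) (r : ℝ), η (closedBall x r) =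
      ∫⁻ y in closedBall x r, B.indicator (fun y => ENNReal.ofReal (w y)) y := by
    intro x r
    rw [hη, withDensity_apply _ measurableSet_closedBall, lintegral_indicator hBm,
      Measure.restrict_restrict measurableSet_closedBall, Measure.restrict_restrict hBm, inter_comm]
  have hηuniv : η univ ≤ ENNReal.ofReal t * volume B := by
    rw [hη, withDensity_apply _ MeasurableSet.univ, Measure.restrict_univ, hB,
      ← vol_mul_lintegral_ballAvg c hR, mul_comm]
    gcongr
  have hηle : ∀ (x : 𝔼 n) (r : ℝ), η (closedBall x r) ≤
      ∫⁻ y in closedBall x r, ENNReal.ofReal (w y) := by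
    intro x r
    rw [hηball]
    exact lintegral_mono fun y => indicator_le_self _ _ _
  set T := {x | x ∈ B ∧ ∃ r : ℝ, (0 < r ∧ r ≤ R) ∧
    ENNReal.ofReal t * volume (closedBall x r) < η (closedBall x r) ∧
    η (closedBall x (5 * r)) ≤ ENNReal.ofReal t * volume (closedBall x (5 * r))} with hT
  -- By Lebesgue differentiation almost every point above level `t` is the centre of a stopping ball.
  have hsub : ∀ᵐ x ∂η, x ∈ {x | t < w x} → x ∈ T := by
    have hfin : ∫⁻ y, B.indicator (fun y => ENNReal.ofReal (w y)) y ≠ ⊤ := by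
      rw [lintegral_indicator hBm, hB, ← vol_mul_lintegral_ballAvg c hR]
      exact ENNReal.mul_ne_top (vol_fin c R) (h.avg_ne_top hC hm hw hp c hR)
    have hleb := (Besicovitch.vitaliFamily (volume : Measure (𝔼 n))).ae_tendsto_lintegral_div
      (hm.ennreal_ofReal.indicator hBm).aemeasurable hfin
    have hac : η ≪ volume.restrict B := withDensity_absolutelyContinuous _ _
    have hB' : ∀ᵐ x ∂η, x ∈ B := hac.ae_le (ae_restrict_mem hBm)
    have hleb' := hac.ae_le (ae_restrict_of_ae (s := B) hleb)
    filter_upwards [hB', hleb'] with x hxB hx htx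
    have htx : t < w x := htx
    have hx2 := hx.comp (Besicovitch.tendsto_filterAt volume x)
    rw [indicator_of_mem hxB] at hx2
    have hev := hx2.eventually (lt_mem_nhds (show ENNReal.ofReal t < ENNReal.ofReal (w x) from
      (ENNReal.ofReal_lt_ofReal_iff (hw x)).mpr htx))
    obtain ⟨r₀, hr₀, hr₀pos⟩ := (hev.and self_mem_nhdsWithin).exists
    have hr₀pos : 0 < r₀ := hr₀pos
    simp only [Function.comp_apply] at hr₀
    rw [← hηball, ENNReal.lt_div_iff_mul_lt (Or.inl (vol_pos x hr₀pos))
      (Or.inl (vol_fin x r₀))] at hr₀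
    have hbig : ∀ r, ENNReal.ofReal t * volume (closedBall x r) < η (closedBall x r) → r ≤ R := by
      intro r hr
      by_contra! hlt
      refine absurd hr (not_lt.mpr ?_)
      calc η (closedBall x r) ≤ η univ := measure_mono (subset_univ _)
        _ ≤ ENNReal.ofReal t * volume B := hηuniv
        _ ≤ _ := by exact mul_le_mul' le_rfl (vol_mono c x hlt.le)
    refine ⟨hxB, ?_⟩
    by_contra! hcon
    have hall : ∀ k : ℕ, ENNReal.ofReal t * volume (closedBall x (5 ^ k * r₀)) <
        η (closedBall x (5 ^ k * r₀)) := by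
      intro k
      induction k with
      | zero => simpa using hr₀
      | succ k ih =>
        have := hcon (5 ^ k * r₀) ⟨by positivity, hbig _ ih⟩ ih
        rwa [← mul_assoc, ← pow_succ'] at this
    obtain ⟨k, hk⟩ := pow_unbounded_of_one_lt (R / r₀) (by norm_num : (1 : ℝ) < 5)
    have := hbig _ (hall k)
    rw [div_lt_iff₀ hr₀pos] at hk
    linarith
  have hch : ∀ x : 𝔼 n, ∃ r : ℝ, x ∈ T → (0 < r ∧ r ≤ R) ∧
      ENNReal.ofReal t * volume (closedBall x r) < η (closedBall x r) ∧
      η (closedBall x (5 * r)) ≤ ENNReal.ofReal t * volume (closedBall x (5 * r)) := by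
    intro x
    by_cases hx : x ∈ T
    · obtain ⟨r, hr⟩ := hx.2
      exact ⟨r, fun _ => hr⟩
    · exact ⟨0, fun hx' => absurd hx' hx⟩
  choose ρ hρ using hch
  rw [← htot]
  refine (measure_mono_ae hsub).trans
    (vitali_measure_le η ν₂ T ρ R (fun x hx => (hρ x hx).1) fun x hx => ?_)
  obtain ⟨⟨hr, hrR⟩, hlo, hhi⟩ := hρ x hx
  set r := ρ x
  have := isProb_ballAvg x hr
  have hsmall := h.small_part hm hw hp hβ (by positivity) hβκ ht x hr (by
    rw [lintegral_ballAvg, ← ENNReal.div_eq_inv_mul, ENNReal.le_div_iff_mul_le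
      (Or.inl (vol_pos x hr)) (Or.inl (vol_fin x r))]
    exact hlo.le.trans (hηle x r))
  have hlow := ballAvg_inter_lower hr hrR hx.1
  have hgood : ENNReal.ofReal ((1 / 2) ^ (n + 1)) ≤ ballAvg x r (B ∩ S) := by
    have h1 : ballAvg x r B ≤ ballAvg x r (B ∩ S) + ballAvg x r {y | w y ≤ β * t} := by
      refine (measure_mono fun y hy => ?_).trans (measure_union_le _ _)
      by_cases hyS : y ∈ S
      · exact Or.inl ⟨hy, hyS⟩
      · exact Or.inr (show w y ≤ β * t from not_lt.mp hyS)
    have h2 : ENNReal.ofReal ((1 / 2) ^ (n + 1)) + ENNReal.ofReal ((1 / 2) ^ (n + 1)) ≤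
        ballAvg x r (B ∩ S) + ENNReal.ofReal ((1 / 2) ^ (n + 1)) := by
      rw [← ENNReal.ofReal_add (by positivity) (by positivity)]
      have : ((1 : ℝ) / 2) ^ (n + 1) + (1 / 2) ^ (n + 1) = (1 / 2) ^ n := by ring
      rw [this]
      exact hlow.trans (h1.trans (by gcongr))
    exact (ENNReal.add_le_add_iff_right ENNReal.ofReal_ne_top).mp h2
  rw [ballAvg, Measure.smul_apply, smul_eq_mul, ← ENNReal.div_eq_inv_mul,
    ENNReal.le_div_iff_mul_le (Or.inl (vol_pos x hr)) (Or.inl (vol_fin x r)),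
    Measure.restrict_apply (hBm.inter hSm)] at hgood
  rw [hν₂, Measure.smul_apply, smul_eq_mul, Measure.restrict_apply measurableSet_closedBall,
    inter_comm (closedBall x r)]
  calc _ ≤ ENNReal.ofReal t * volume (closedBall x (5 * r)) := hhi
    _ = K * (ENNReal.ofReal ((1 / 2) ^ (n + 1)) * volume (closedBall x r)) := by
      rw [vol_scale x x (by norm_num) hr.le, hK, ← mul_assoc, ← mul_assoc,
        ← ENNReal.ofReal_mul ht.le, ← ENNReal.ofReal_mul (by positivity)]
      congr 2
      rw [one_div, inv_pow]
      field_simp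
    _ ≤ _ := by gcongr

/-- The reverse Hölder inequality for `A_p` weights, with exponents `1 + γ` for all small `γ`. -/
lemma BallAp.reverse_holder {n : ℕ} {p : ℝ} {C : ℝ≥0∞} {w : (𝔼 n) → ℝ}
    (hm : Measurable w) (hw : ∀ x, 0 < w x) (hp : 1 < p) (hC : C ≠ ⊤) (h : BallAp p C w) :
    ∃ γ₀ : ℝ, 0 < γ₀ ∧ ∀ γ : ℝ, 0 < γ → γ ≤ γ₀ → ∀ (c : 𝔼 n) (R : ℝ), 0 < R →
      ∫⁻ x, ENNReal.ofReal (w x ^ (1 + γ)) ∂ballAvg c R ≤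
        2 * (∫⁻ x, ENNReal.ofReal (w x) ∂ballAvg c R) ^ (1 + γ) := by
  obtain ⟨β, hβ, hβ1, hβκ⟩ : ∃ β : ℝ, 0 < β ∧ β ≤ 1 ∧
      C * ENNReal.ofReal β ≤ ENNReal.ofReal (((1 / 2) ^ (n + 1)) ^ (p - 1)) := by
    set k : ℝ := ((1 / 2) ^ (n + 1)) ^ (p - 1) with hk
    have hk0 : 0 < k := by positivity
    have hC0 : 0 ≤ C.toReal := ENNReal.toReal_nonneg
    refine ⟨min 1 (k / (C.toReal + 1)), by positivity, min_le_left _ _, ?_⟩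
    rw [← ENNReal.ofReal_toReal hC, ← ENNReal.ofReal_mul hC0]
    refine ENNReal.ofReal_le_ofReal ?_
    rw [ENNReal.toReal_ofReal hC0]
    calc C.toReal * min 1 (k / (C.toReal + 1)) ≤ (C.toReal + 1) * (k / (C.toReal + 1)) := by
          gcongr
          · linarith
          · exact min_le_right _ _
      _ = k := by field_simp
  obtain ⟨A, hA⟩ : ∃ A : ℝ, A = 5 ^ n * 2 ^ (n + 1) := ⟨_, rfl⟩
  have hA0 : 0 < A := by rw [hA]; positivity
  refine ⟨min 1 (β ^ 2 / (2 * A)), by positivity, fun γ hγ hγ₀ c R hR => ?_⟩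
  have hγ1 : γ ≤ 1 := hγ₀.trans (min_le_left _ _)
  have hγ2 : γ * A * (β⁻¹) ^ 2 ≤ 1 / 2 := by
    have := hγ₀.trans (min_le_right _ _)
    rw [le_div_iff₀ (by positivity)] at this
    rw [inv_pow, ← div_eq_mul_inv, div_le_iff₀ (by positivity)]
    linarith
  have hfin := h.avg_ne_top hC hm hw hp c hR
  have hprob := isProb_ballAvg c hR
  have hpos := lintegral_ofReal_pos hm hw (ballAvg c R) (IsProbabilityMeasure.ne_zero _)
  set I := ∫⁻ x, ENNReal.ofReal (w x) ∂ballAvg c R with hI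
  set m := I.toReal with hmdef
  have hm0 : 0 < m := ENNReal.toReal_pos hpos.ne' hfin
  have hmI : ENNReal.ofReal m = I := ENNReal.ofReal_toReal hfin
  set B := closedBall c R with hB
  set μ := volume.restrict B with hμ
  have hW : Measurable fun x => ENNReal.ofReal (w x) := hm.ennreal_ofReal
  set η := μ.withDensity fun x => ENNReal.ofReal (w x) with hη
  have hηuniv : η univ = volume B * I := by
    rw [hη, withDensity_apply _ MeasurableSet.univ, Measure.restrict_univ, hI,
      vol_mul_lintegral_ballAvg c hR]
  have hηt : η univ ≠ ⊤ := by rw [hηuniv]; exact ENNReal.mul_ne_top (vol_fin c R) hfin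
  -- The truncation at height `N` makes the integral to be absorbed finite.
  have main : ∀ N : ℕ, ∫⁻ x, ENNReal.ofReal ((min (w x) N) ^ γ) ∂η ≤
      2 * (ENNReal.ofReal (m ^ γ) * η univ) := by
    intro N
    set f := fun x => min (w x) (N : ℝ) with hf
    have hfm : Measurable f := hm.min measurable_const
    have hf0 : ∀ x, 0 ≤ f x := fun x => le_min (hw x).le (Nat.cast_nonneg N)
    set X := ∫⁻ x, ENNReal.ofReal (f x ^ γ) ∂η with hX
    have hXt : X ≠ ⊤ := by
      have : X ≤ ENNReal.ofReal ((N : ℝ) ^ γ) * η univ := by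
        rw [hX, ← lintegral_const]
        refine lintegral_mono fun x => ENNReal.ofReal_le_ofReal ?_
        exact Real.rpow_le_rpow (hf0 x) (min_le_right _ _) hγ.le
      exact ne_top_of_le_ne_top (ENNReal.mul_ne_top ENNReal.ofReal_ne_top hηt) this
    have l1 := lintegral_rpow_eq_lintegral_meas_lt_mul η (f := f)
      (Filter.Eventually.of_forall hf0) hfm.aemeasurable hγ
    have l2 := lintegral_rpow_eq_lintegral_meas_lt_mul η (f := fun _ => m)
      (Filter.Eventually.of_forall fun _ => hm0.le) aemeasurable_const hγ
    have l3 := lintegral_rpow_eq_lintegral_meas_lt_mul μ (f := fun x => β⁻¹ * f x)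
      (Filter.Eventually.of_forall fun x => mul_nonneg (by positivity) (hf0 x))
      (hfm.const_mul _).aemeasurable (p := 1 + γ) (by linarith)
    rw [lintegral_const] at l2
    have step : ∀ t ∈ Ioi (0 : ℝ), η {a | t < f a} * ENNReal.ofReal (t ^ (γ - 1)) ≤
        η {_a | t < m} * ENNReal.ofReal (t ^ (γ - 1)) + ENNReal.ofReal A *
          (μ {a | t < β⁻¹ * f a} * ENNReal.ofReal (t ^ (1 + γ - 1))) := by
      intro t ht
      have ht : 0 < t := ht
      by_cases htm : t < m
      · refine le_add_right ?_
        refine mul_le_mul' (measure_mono fun a _ => ?_) le_rfl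
        exact htm
      refine le_add_left ?_
      by_cases htN : t < N
      swap
      · have : {a | t < f a} = ∅ := by
          ext a
          simp only [hf, mem_ofPred_eq, mem_empty_iff_false, iff_false, not_lt]
          exact (min_le_right _ _).trans (not_lt.mp htN)
        rw [this]; simp
      have hlev := h.level_set (t := t) hm hw hp hC hβ hβκ c hR ht (by
        rw [← hI, ← hmI]; exact ENNReal.ofReal_le_ofReal (not_lt.mp htm))
      rw [← hA] at hlev
      have s1 : η {a | t < f a} ≤ η {a | t < w a} :=
        measure_mono fun a (ha : t < f a) => show t < w a from ha.trans_le (min_le_left _ _)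
      have s2 : μ {a | β * t < w a} ≤ μ {a | t < β⁻¹ * f a} := by
        refine measure_mono fun a ha => ?_
        simp only [mem_ofPred_eq] at ha ⊢
        rw [lt_inv_mul_iff₀ hβ]
        refine lt_min ha (lt_of_le_of_lt ?_ htN)
        exact mul_le_of_le_one_left ht.le hβ1
      calc _ ≤ (ENNReal.ofReal (A * t) * μ {a | t < β⁻¹ * f a}) * ENNReal.ofReal (t ^ (γ - 1)) := by
            gcongr
            exact s1.trans (hlev.trans (by gcongr))
        _ = _ := by
          have : ENNReal.ofReal (t ^ (1 + γ - 1)) =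
              ENNReal.ofReal t * ENNReal.ofReal (t ^ (γ - 1)) := by
            rw [← ENNReal.ofReal_mul ht.le, ← Real.rpow_one_add' ht.le (by simpa using hγ.ne')]
            ring_nf
          rw [this, ENNReal.ofReal_mul hA0.le]
          ring
    have hmeas : Measurable fun t : ℝ => η {_a : 𝔼 n | t < m} * ENNReal.ofReal (t ^ (γ - 1)) := by
      refine Measurable.mul (Antitone.measurable fun s t hst => measure_mono fun _ h => ?_)
        (by fun_prop)
      exact lt_of_le_of_lt hst h
    have hX1 : X ≤ ENNReal.ofReal (m ^ γ) * η univ + ENNReal.ofReal γ * (ENNReal.ofReal A *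
        ∫⁻ t in Ioi (0 : ℝ), μ {a | t < β⁻¹ * f a} * ENNReal.ofReal (t ^ (1 + γ - 1))) := by
      rw [hX, l1, l2, ← mul_add, ← lintegral_const_mul' (ENNReal.ofReal A) _ ENNReal.ofReal_ne_top,
        ← lintegral_add_left hmeas]
      refine mul_le_mul' le_rfl ?_
      exact setLIntegral_mono' measurableSet_Ioi step
    have hX2 : ∫⁻ t in Ioi (0 : ℝ), μ {a | t < β⁻¹ * f a} * ENNReal.ofReal (t ^ (1 + γ - 1)) ≤
        ENNReal.ofReal ((β⁻¹) ^ 2) * X := by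
      have a1 : ∫⁻ t in Ioi (0 : ℝ), μ {a | t < β⁻¹ * f a} * ENNReal.ofReal (t ^ (1 + γ - 1)) ≤
          ∫⁻ x, ENNReal.ofReal ((β⁻¹ * f x) ^ (1 + γ)) ∂μ := by
        rw [l3]
        refine le_mul_of_one_le_left (zero_le) ?_
        rw [ENNReal.one_le_ofReal]; linarith
      refine a1.trans ?_
      rw [hX, hη, lintegral_withDensity_eq_lintegral_mul _ hW (by fun_prop),
        ← lintegral_const_mul' _ _ ENNReal.ofReal_ne_top]
      refine lintegral_mono fun x => ?_
      rw [Pi.mul_apply, ← ENNReal.ofReal_mul (hw x).le, ← ENNReal.ofReal_mul (by positivity)]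
      refine ENNReal.ofReal_le_ofReal ?_
      rw [Real.mul_rpow (by positivity) (hf0 x)]
      have b1 : (β⁻¹) ^ (1 + γ) ≤ (β⁻¹) ^ 2 := by
        rw [← Real.rpow_natCast]
        exact Real.rpow_le_rpow_of_exponent_le ((one_le_inv₀ hβ).mpr hβ1) (by push_cast; linarith)
      have b2 : f x ^ (1 + γ) ≤ w x * f x ^ γ := by
        rw [Real.rpow_one_add' (hf0 x) (by linarith)]
        have := Real.rpow_nonneg (hf0 x) γ
        gcongr
        exact min_le_left _ _
      have := Real.rpow_nonneg (hf0 x) (1 + γ)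
      gcongr
    have hX3 : X ≤ ENNReal.ofReal (m ^ γ) * η univ + ENNReal.ofReal (1 / 2) * X := by
      refine hX1.trans (add_le_add le_rfl ?_)
      calc _ ≤ ENNReal.ofReal γ * (ENNReal.ofReal A * (ENNReal.ofReal ((β⁻¹) ^ 2) * X)) := by
            gcongr
        _ = ENNReal.ofReal (γ * A * (β⁻¹) ^ 2) * X := by
            rw [ENNReal.ofReal_mul (by positivity), ENNReal.ofReal_mul hγ.le]; ring
        _ ≤ _ := mul_le_mul' (ENNReal.ofReal_le_ofReal hγ2) le_rfl
    have hhalf : ENNReal.ofReal (1 / 2) * X + ENNReal.ofReal (1 / 2) * X = X := by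
      rw [← add_mul, ← ENNReal.ofReal_add (by norm_num) (by norm_num)]; norm_num
    have hX4 : ENNReal.ofReal (1 / 2) * X ≤ ENNReal.ofReal (m ^ γ) * η univ := by
      refine (ENNReal.add_le_add_iff_right
        (ENNReal.mul_ne_top (ENNReal.ofReal_ne_top (r := 1 / 2)) hXt)).mp ?_
      rw [hhalf]; exact hX3
    rw [← hhalf, two_mul]
    exact add_le_add hX4 hX4
  have hsup : ∫⁻ x in B, ENNReal.ofReal (w x ^ (1 + γ)) ≤
      2 * (ENNReal.ofReal (m ^ γ) * η univ) := by
    have e1 : ∫⁻ x in B, ENNReal.ofReal (w x ^ (1 + γ)) =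
        ∫⁻ x, ⨆ N : ℕ, ENNReal.ofReal ((min (w x) N) ^ γ) ∂η := by
      rw [hη, lintegral_withDensity_eq_lintegral_mul _ hW (by fun_prop)]
      refine lintegral_congr fun x => ?_
      rw [Pi.mul_apply, Real.rpow_one_add' (hw x).le (by linarith), ENNReal.ofReal_mul (hw x).le]
      congr 1
      refine le_antisymm ?_ (iSup_le fun N => ENNReal.ofReal_le_ofReal ?_)
      · obtain ⟨N, hN⟩ := exists_nat_ge (w x)
        refine le_iSup_of_le N ?_
        rw [min_eq_left hN]
      · exact Real.rpow_le_rpow (le_min (hw x).le (Nat.cast_nonneg N)) (min_le_left _ _) hγ.le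
    rw [e1, lintegral_iSup (fun N => by fun_prop)]
    · exact iSup_le main
    · intro N M hNM x
      refine ENNReal.ofReal_le_ofReal (Real.rpow_le_rpow
        (le_min (hw x).le (Nat.cast_nonneg N)) ?_ hγ.le)
      gcongr
  rw [lintegral_ballAvg]
  calc _ ≤ (volume B)⁻¹ * (2 * (ENNReal.ofReal (m ^ γ) * (volume B * I))) := by
        rw [← hηuniv]; gcongr
    _ = ((volume B)⁻¹ * volume B) * (2 * (I ^ (1 + γ))) := by
        rw [ENNReal.rpow_add _ _ hpos.ne' hfin, ENNReal.rpow_one,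
          ← ENNReal.ofReal_rpow_of_pos hm0, hmI]
        ring
    _ = _ := by rw [ENNReal.inv_mul_cancel (vol_pos c hR) (vol_fin c R), one_mul]

/-! ### Perturbed weights and the grand norm -/

/-- Hölder's inequality for powers `s + t ≤ 1` on a probability space; the missing power falls on
the constant function one. -/
lemma lintegral_rpow_mul_rpow_le {α : Type*} [MeasurableSpace α] (μ : Measure α)
    [IsProbabilityMeasure μ] {F G : α → ℝ≥0∞} (hF : Measurable F) (hG : Measurable G) {s t : ℝ}
    (hs : 0 ≤ s) (ht : 0 ≤ t) (hst : s + t ≤ 1) :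
    ∫⁻ x, F x ^ s * G x ^ t ∂μ ≤ (∫⁻ x, F x ∂μ) ^ s * (∫⁻ x, G x ∂μ) ^ t := by
  have := ENNReal.lintegral_prod_norm_pow_le (μ := μ) (Finset.univ : Finset (Fin 3))
    (f := ![F, G, 1]) (by
      intro i _
      fin_cases i
      · exact hF.aemeasurable
      · exact hG.aemeasurable
      · exact aemeasurable_const) (p := ![s, t, 1 - s - t])
    (by simp [Fin.sum_univ_three]) (by
      intro i _
      fin_cases i
      · exact hs
      · exact ht
      · show 0 ≤ 1 - s - t
        linarith)
  simpa [Fin.prod_univ_three] using this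

lemma rpow_le_one_add (x : ℝ≥0∞) {y : ℝ} (hy : 0 ≤ y) (hy1 : y ≤ 1) : x ^ y ≤ 1 + x :=
  calc x ^ y ≤ (1 + x) ^ y := ENNReal.rpow_le_rpow le_add_self hy
    _ ≤ (1 + x) ^ (1 : ℝ) := ENNReal.rpow_le_rpow_of_exponent_le le_self_add hy1
    _ = 1 + x := ENNReal.rpow_one _

/-- The weights `w a ^ ε` with small `ε` satisfy one `A_{p₀}` condition with `p₀ < q` and a constant
independent of `ε`. The reverse Hölder inequality for `w` and for its dual weight leaves room in
Hölder's inequality both for the factor `a ^ ε` and for lowering the exponent from `q` to `p₀`. -/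
lemma BallAp.perturb {n : ℕ} {q δ : ℝ} {Cw Ca : ℝ≥0∞} {w a : (𝔼 n) → ℝ}
    (hwm : Measurable w) (hw : ∀ x, 0 < w x) (ham : Measurable a) (ha : ∀ x, 0 < a x)
    (hq : 1 < q) (hδ : 0 < δ) (hCw : Cw ≠ ⊤) (hCa : Ca ≠ ⊤)
    (h : BallAp q Cw w) (h' : BallAp q Ca fun x => a x ^ δ) :
    ∃ (p₀ ε₀ : ℝ) (C : ℝ≥0∞), 1 < p₀ ∧ p₀ < q ∧ 0 < ε₀ ∧ C ≠ ⊤ ∧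
      ∀ ε, 0 < ε → ε ≤ ε₀ → BallAp p₀ C fun x => w x * a x ^ ε := by
  have hq1 : 0 < q - 1 := by linarith
  have hσ : ∀ x, 0 < w x ^ (-(1 / (q - 1))) := fun x => Real.rpow_pos_of_pos (hw x) _
  have hσm : Measurable fun x => w x ^ (-(1 / (q - 1))) := hwm.pow_const _
  obtain ⟨γ₁, hγ₁, R₁⟩ := h.reverse_holder hwm hw hq hCw
  obtain ⟨γ₂, hγ₂, R₂⟩ := (h.dual hq hw).reverse_holder hσm hσ
    (by rw [lt_div_iff₀ hq1]; linarith) (ENNReal.rpow_ne_top_of_nonneg (by positivity) hCw)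
  obtain ⟨s, hs, hs1, hs2, hs3⟩ : ∃ s : ℝ, 0 < s ∧ s ≤ 1 ∧ s ≤ γ₁ ∧ s ≤ γ₂ / 3 :=
    ⟨min 1 (min γ₁ (γ₂ / 3)), by positivity, min_le_left _ _,
      (min_le_right _ _).trans (min_le_left _ _), (min_le_right _ _).trans (min_le_right _ _)⟩
  -- The reverse Hölder exponents are `r` for `w` and `r ^ 2 ≤ 1 + 3 s` for the dual weight; the
  -- second one pays both for the factor `a ^ ε` and for replacing `q - 1` by `(q - 1) / r`.
  obtain ⟨r, hr⟩ : ∃ r : ℝ, r = 1 + s := ⟨_, rfl⟩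
  have hr1 : 1 < r := by linarith
  have hr0 : 0 < r := by linarith
  have hinv : 1 / r < 1 := by rw [div_lt_one hr0]; exact hr1
  refine ⟨1 + (q - 1) / r, δ * (1 - 1 / r) / r,
    2 ^ (1 / r) * 2 ^ ((q - 1) / r ^ 2) * Cw * (1 + Ca), ?_, ?_, ?_, ?_, ?_⟩
  · have : 0 < (q - 1) / r := by positivity
    linarith
  · have : (q - 1) / r < q - 1 := div_lt_self hq1 hr1
    linarith
  · have : 0 < 1 - 1 / r := by linarith
    positivity
  · refine ENNReal.mul_ne_top (ENNReal.mul_ne_top (ENNReal.mul_ne_top ?_ ?_) hCw)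
      (ENNReal.add_ne_top.mpr ⟨ENNReal.one_ne_top, hCa⟩) <;>
    exact ENNReal.rpow_ne_top_of_nonneg (by positivity) (by simp)
  intro ε hε hεε c R hR
  have hprob := isProb_ballAvg c hR
  have hθ : ε * r / δ ≤ 1 - 1 / r := by
    rw [le_div_iff₀ hr0] at hεε
    rw [div_le_iff₀ hδ]
    linarith
  have hθ' : ε / δ ≤ ε * r / δ := by
    gcongr
    exact le_mul_of_one_le_right hε.le hr1.le
  have hinv0 : 0 < 1 / r := by positivity
  set Iw := ∫⁻ x, ENNReal.ofReal (w x) ∂ballAvg c R with hIw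
  set Iσ := ∫⁻ x, ENNReal.ofReal (w x ^ (-(1 / (q - 1)))) ∂ballAvg c R with hIσ
  set Ia := ∫⁻ x, ENNReal.ofReal (a x ^ δ) ∂ballAvg c R with hIa
  set Iτ := ∫⁻ x, ENNReal.ofReal ((a x ^ δ) ^ (-(1 / (q - 1)))) ∂ballAvg c R with hIτ
  have b1 : ∫⁻ x, ENNReal.ofReal (w x * a x ^ ε) ∂ballAvg c R ≤
      2 ^ (1 / r) * Iw * Ia ^ (ε / δ) := by
    have e : ∀ x, ENNReal.ofReal (w x * a x ^ ε) =
        ENNReal.ofReal (w x ^ r) ^ (1 / r) * ENNReal.ofReal (a x ^ δ) ^ (ε / δ) := by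
      intro x
      have := hw x
      have := ha x
      rw [ENNReal.ofReal_rpow_of_pos (by positivity), ENNReal.ofReal_rpow_of_pos (by positivity),
        ← ENNReal.ofReal_mul (by positivity), ← Real.rpow_mul (hw x).le, ← Real.rpow_mul (ha x).le,
        mul_one_div_cancel hr0.ne', Real.rpow_one, mul_div_cancel₀ _ hδ.ne']
    rw [lintegral_congr e]
    refine (lintegral_rpow_mul_rpow_le _ (by fun_prop) (by fun_prop) hinv0.le (by positivity)
      (by linarith)).trans ?_
    refine mul_le_mul' ?_ le_rfl
    have := R₁ s hs hs2 c R hR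
    rw [← hr] at this
    refine (ENNReal.rpow_le_rpow this hinv0.le).trans (le_of_eq ?_)
    rw [ENNReal.mul_rpow_of_nonneg _ _ hinv0.le, ← ENNReal.rpow_mul, mul_one_div_cancel hr0.ne',
      ENNReal.rpow_one]
  have hexp : 1 + (q - 1) / r - 1 = (q - 1) / r := by ring
  have b2 : (∫⁻ x, ENNReal.ofReal ((w x * a x ^ ε) ^ (-(1 / (1 + (q - 1) / r - 1))))
      ∂ballAvg c R) ^ (1 + (q - 1) / r - 1) ≤
      2 ^ ((q - 1) / r ^ 2) * Iσ ^ (q - 1) * (Iτ ^ (q - 1)) ^ (ε / δ) := by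
    rw [hexp]
    have e : ∀ x, ENNReal.ofReal ((w x * a x ^ ε) ^ (-(1 / ((q - 1) / r)))) =
        ENNReal.ofReal ((w x ^ (-(1 / (q - 1)))) ^ (r ^ 2)) ^ (1 / r) *
          ENNReal.ofReal ((a x ^ δ) ^ (-(1 / (q - 1)))) ^ (ε * r / δ) := by
      intro x
      have := hw x
      have := ha x
      rw [ENNReal.ofReal_rpow_of_pos (by positivity), ENNReal.ofReal_rpow_of_pos (by positivity),
        ← ENNReal.ofReal_mul (by positivity), Real.mul_rpow (hw x).le (by positivity),
        ← Real.rpow_mul (ha x).le, ← Real.rpow_mul (ha x).le, ← Real.rpow_mul (ha x).le,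
        ← Real.rpow_mul (hw x).le, ← Real.rpow_mul (hw x).le]
      congr 3 <;> field_simp
    rw [lintegral_congr e]
    have hH := lintegral_rpow_mul_rpow_le (ballAvg c R)
      (F := fun x => ENNReal.ofReal ((w x ^ (-(1 / (q - 1)))) ^ (r ^ 2)))
      (G := fun x => ENNReal.ofReal ((a x ^ δ) ^ (-(1 / (q - 1)))))
      (by fun_prop) (by fun_prop) hinv0.le (t := ε * r / δ) (by positivity) (by linarith)
    have hR2 := R₂ (r ^ 2 - 1) (by nlinarith) (by rw [hr]; nlinarith) c R hR
    rw [show 1 + (r ^ 2 - 1) = r ^ 2 by ring] at hR2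
    refine (ENNReal.rpow_le_rpow (hH.trans (mul_le_mul' (ENNReal.rpow_le_rpow hR2 hinv0.le)
      le_rfl)) (by positivity)).trans (le_of_eq ?_)
    rw [ENNReal.mul_rpow_of_nonneg _ _ (by positivity), ENNReal.mul_rpow_of_nonneg _ _ hinv0.le,
      ENNReal.mul_rpow_of_nonneg _ _ (by positivity)]
    simp only [← ENNReal.rpow_mul]
    have x1 : 1 / r * ((q - 1) / r) = (q - 1) / r ^ 2 := by field_simp
    have x2 : r ^ 2 * (1 / r * ((q - 1) / r)) = q - 1 := by field_simp
    have x3 : ε * r / δ * ((q - 1) / r) = (q - 1) * (ε / δ) := by field_simp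
    simp only [mul_assoc (r ^ 2), x1, x3]
    rw [← x1, x2]
  calc _ ≤ (2 ^ (1 / r) * Iw * Ia ^ (ε / δ)) *
        (2 ^ ((q - 1) / r ^ 2) * Iσ ^ (q - 1) * (Iτ ^ (q - 1)) ^ (ε / δ)) := mul_le_mul' b1 b2
    _ = 2 ^ (1 / r) * 2 ^ ((q - 1) / r ^ 2) * (Iw * Iσ ^ (q - 1)) *
        (Ia * Iτ ^ (q - 1)) ^ (ε / δ) := by
        rw [ENNReal.mul_rpow_of_nonneg _ _ (by positivity)]; ring
    _ ≤ _ := by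
        gcongr
        · exact h c R hR
        · refine (rpow_le_one_add _ (by positivity) (by linarith)).trans ?_
          gcongr
          exact h' c R hR

/-- The estimate for weights that are positive everywhere. For small `ε` it holds separately for
each `ε`; for the remaining `ε` the `ε`-term is dominated by the `ε₀`-term, by Hölder's inequality
and the integrability of `a ^ q` against `w`. -/
lemma maximal_bounded_of_pos {n : ℕ} (q : ℝ) (hq : 1 < q) (w a : (𝔼 n) → ℝ)
    (hwm : Measurable w) (hw : ∀ x, 0 < w x) (ham : Measurable a) (ha : ∀ x, 0 < a x)
    (δ : ℝ) (hδ : 0 < δ) (haδ : MemAq q (fun x => a x ^ δ))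
    (ha_mem : wLqNorm q w univ a ≠ ⊤) (hwA : MemAq q w) :
    ∃ K : ℝ≥0∞, 0 < K ∧ K ≠ ⊤ ∧ ∀ g : (𝔼 n) → ℝ, Measurable g →
        grandNorm q w a univ (fun x => (maximalFn g x).toReal) ≤ K * grandNorm q w a univ g := by
  obtain ⟨Cw, hCw, hB⟩ := hwA.ballAp hq
  obtain ⟨Ca, hCa, hB'⟩ := haδ.ballAp hq
  obtain ⟨p₀, ε₁, C, hp₀, hp₀q, hε₁, hC, hAp⟩ := hB.perturb hwm hw ham ha hq hδ hCw hCa hB'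
  obtain ⟨ε₀, hε₀, hε₀1, hε₀2⟩ : ∃ ε₀ : ℝ, 0 < ε₀ ∧ ε₀ ≤ ε₁ ∧ ε₀ ≤ (q - p₀) / 2 :=
    ⟨min ε₁ ((q - p₀) / 2), lt_min hε₁ (by linarith), min_le_left _ _, min_le_right _ _⟩
  set J := ∫⁻ x, ENNReal.ofReal (a x) ^ q * ENNReal.ofReal (w x) with hJ
  have hJt : J ≠ ⊤ := by
    intro htop
    refine ha_mem ?_
    have : ∀ x, ENNReal.ofReal |a x| ^ q * ENNReal.ofReal (w x) =
        ENNReal.ofReal (a x) ^ q * ENNReal.ofReal (w x) := fun x => by rw [abs_of_pos (ha x)]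
    rw [wLqNorm, Measure.restrict_univ, lintegral_congr this, ← hJ, htop,
      ENNReal.top_rpow_of_pos (by positivity)]
  set K₁ := ENNReal.ofReal (5 ^ n) ^ p₀ * C * C * ENNReal.ofReal (2 ^ q * (q / ((q - p₀) / 2)))
    with hK₁
  have hK₁t : K₁ ≠ ⊤ :=
    ENNReal.mul_ne_top (ENNReal.mul_ne_top (ENNReal.mul_ne_top
      (ENNReal.rpow_ne_top_of_nonneg (by linarith) ENNReal.ofReal_ne_top) hC) hC)
      ENNReal.ofReal_ne_top
  set L := (1 + ENNReal.ofReal q) * (1 + J) * (1 + ENNReal.ofReal ε₀⁻¹) with hL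
  have hL1 : 1 ≤ L := by
    rw [hL]
    exact one_le_mul (one_le_mul le_self_add le_self_add) le_self_add
  refine ⟨L * (1 + K₁), ?_, ?_, fun g hg => ?_⟩
  · exact lt_of_lt_of_le one_pos (one_le_mul hL1 le_self_add)
  · refine ENNReal.mul_ne_top (ENNReal.mul_ne_top (ENNReal.mul_ne_top ?_ ?_) ?_) ?_ <;>
    simp [hJt, hK₁t]
  have hsmall : ∀ ε, 0 < ε → ε ≤ ε₀ →
      (ENNReal.ofReal ε * ∫⁻ x, ENNReal.ofReal |(maximalFn g x).toReal| ^ (q - ε) *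
        ENNReal.ofReal (w x * a x ^ ε)) ^ (1 / (q - ε)) ≤
      (1 + K₁) * grandNorm q w a univ g := by
    intro ε hε hεε
    have hqε : 1 < q - ε := by linarith
    have hst := (hAp ε hε (hεε.trans hε₀1)).strong_type (p := q - ε)
      (hwm.mul (ham.pow_const ε)) (fun x => mul_pos (hw x) (Real.rpow_pos_of_pos (ha x) ε))
      hp₀ (by linarith) hC hg
    have hKK : ENNReal.ofReal (5 ^ n) ^ p₀ * C * C *
        ENNReal.ofReal (2 ^ (q - ε) * ((q - ε) / (q - ε - p₀))) ≤ K₁ := by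
      rw [hK₁]
      refine mul_le_mul' le_rfl (ENNReal.ofReal_le_ofReal ?_)
      refine mul_le_mul (Real.rpow_le_rpow_of_exponent_le (by norm_num) (by linarith)) ?_
        (div_nonneg (by linarith) (by linarith)) (by positivity)
      exact div_le_div₀ (by linarith) (by linarith) (by linarith) (by linarith)
    have hterm : (ENNReal.ofReal ε * ∫⁻ x, ENNReal.ofReal |g x| ^ (q - ε) *
        ENNReal.ofReal (w x * a x ^ ε)) ^ (1 / (q - ε)) ≤ grandNorm q w a univ g := by
      rw [grandNorm, Measure.restrict_univ]
      exact le_iSup₂_of_le (f := fun (ε : ℝ) (_ : ε ∈ Set.Ioo (0 : ℝ) (q - 1)) =>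
        (ENNReal.ofReal ε * ∫⁻ x, ENNReal.ofReal |g x| ^ (q - ε) *
          ENNReal.ofReal (w x * a x ^ ε)) ^ (1 / (q - ε))) ε ⟨hε, by linarith⟩ le_rfl
    have hinv0 : 0 ≤ 1 / (q - ε) := by positivity
    calc _ ≤ (ENNReal.ofReal ε * (K₁ * ∫⁻ x, ENNReal.ofReal |g x| ^ (q - ε) *
        ENNReal.ofReal (w x * a x ^ ε))) ^ (1 / (q - ε)) := by
          refine ENNReal.rpow_le_rpow (mul_le_mul' le_rfl ?_) hinv0
          exact hst.trans (mul_le_mul' hKK le_rfl)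
      _ = K₁ ^ (1 / (q - ε)) * (ENNReal.ofReal ε * ∫⁻ x, ENNReal.ofReal |g x| ^ (q - ε) *
        ENNReal.ofReal (w x * a x ^ ε)) ^ (1 / (q - ε)) := by
          rw [mul_left_comm, ENNReal.mul_rpow_of_nonneg _ _ hinv0]
      _ ≤ _ := by
          refine mul_le_mul' (rpow_le_one_add _ hinv0 ?_) hterm
          rw [div_le_one (by linarith)]
          exact hqε.le
  have hFm : Measurable fun x => (maximalFn g x).toReal := (measurable_maximalFn g).ennreal_toReal
  conv_lhs => rw [grandNorm, Measure.restrict_univ]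
  refine iSup₂_le fun ε hε => ?_
  obtain ⟨hε, hεq⟩ := hε
  by_cases hεε : ε ≤ ε₀
  · refine (hsmall ε hε hεε).trans ?_
    rw [mul_assoc]
    exact le_mul_of_one_le_left zero_le hL1
  push Not at hεε
  have hqε : 1 < q - ε := by linarith
  have hqε₀ : 1 < q - ε₀ := by linarith
  set θ := (q - ε) / (q - ε₀) with hθ
  have hθ0 : 0 ≤ θ := by positivity
  have hθ1 : θ ≤ 1 := by rw [hθ, div_le_one (by linarith)]; linarith
  set X := ∫⁻ x, ENNReal.ofReal |(maximalFn g x).toReal| ^ (q - ε₀) *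
        ENNReal.ofReal (w x * a x ^ ε₀) with hX
  have hHol : ∫⁻ x, ENNReal.ofReal |(maximalFn g x).toReal| ^ (q - ε) *
        ENNReal.ofReal (w x * a x ^ ε) ≤ X ^ θ * J ^ (1 - θ) := by
    have e : ∀ x, ENNReal.ofReal |(maximalFn g x).toReal| ^ (q - ε) *
        ENNReal.ofReal (w x * a x ^ ε) = (ENNReal.ofReal |(maximalFn g x).toReal| ^ (q - ε₀) *
        ENNReal.ofReal (w x * a x ^ ε₀)) ^ θ *
          (ENNReal.ofReal (a x) ^ q * ENNReal.ofReal (w x)) ^ (1 - θ) := by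
      intro x
      have hwx := hw x
      have hax := ha x
      have e1 : (q - ε₀) * θ = q - ε := by rw [hθ]; field_simp
      have e2 : w x * a x ^ ε =
          (w x * a x ^ ε₀) ^ θ * (a x ^ q * w x) ^ (1 - θ) := by
        rw [Real.mul_rpow hwx.le (by positivity), Real.mul_rpow (by positivity) hwx.le,
          ← Real.rpow_mul hax.le, ← Real.rpow_mul hax.le]
        have e3 : w x ^ θ * w x ^ (1 - θ) = w x := by
          rw [← Real.rpow_add hwx]; simp
        have e4 : a x ^ (ε₀ * θ) * a x ^ (q * (1 - θ)) = a x ^ ε := by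
          rw [← Real.rpow_add hax]
          congr 1
          linear_combination -e1
        calc _ = (w x ^ θ * w x ^ (1 - θ)) * (a x ^ (ε₀ * θ) * a x ^ (q * (1 - θ))) := by
              rw [e3, e4]
          _ = _ := by ring
      have hE : ENNReal.ofReal (w x * a x ^ ε) = ENNReal.ofReal (w x * a x ^ ε₀) ^ θ *
          (ENNReal.ofReal (a x) ^ q * ENNReal.ofReal (w x)) ^ (1 - θ) := by
        rw [ENNReal.ofReal_rpow_of_pos hax, ← ENNReal.ofReal_mul (by positivity),
          ENNReal.ofReal_rpow_of_pos (by positivity), ENNReal.ofReal_rpow_of_pos (by positivity),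
          ← ENNReal.ofReal_mul (by positivity), ← e2]
      rw [ENNReal.mul_rpow_of_nonneg _ _ hθ0, ← ENNReal.rpow_mul, e1, hE, mul_assoc]
    rw [lintegral_congr e]
    exact ENNReal.lintegral_mul_norm_pow_le (by fun_prop) (by fun_prop) hθ0 (by linarith) (by ring)
  have hinv0 : 0 ≤ 1 / (q - ε) := by positivity
  have hinv1 : 1 / (q - ε) ≤ 1 := by rw [div_le_one (by linarith)]; exact hqε.le
  have hXle : X ^ (1 / (q - ε₀)) ≤ (1 + ENNReal.ofReal ε₀⁻¹) *
      ((1 + K₁) * grandNorm q w a univ g) := by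
    have : X = ENNReal.ofReal ε₀⁻¹ * (ENNReal.ofReal ε₀ * X) := by
      rw [← mul_assoc, ← ENNReal.ofReal_mul (by positivity), inv_mul_cancel₀ hε₀.ne',
        ENNReal.ofReal_one, one_mul]
    rw [this, ENNReal.mul_rpow_of_nonneg _ _ (by positivity)]
    refine mul_le_mul' (rpow_le_one_add _ (by positivity) ?_) (hsmall ε₀ hε₀ le_rfl)
    rw [div_le_one (by linarith)]
    exact hqε₀.le
  calc _ ≤ (ENNReal.ofReal ε * (X ^ θ * J ^ (1 - θ))) ^ (1 / (q - ε)) := by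
        exact ENNReal.rpow_le_rpow (mul_le_mul' le_rfl hHol) hinv0
    _ = ENNReal.ofReal ε ^ (1 / (q - ε)) * J ^ ((1 - θ) * (1 / (q - ε))) *
        X ^ (1 / (q - ε₀)) := by
        rw [ENNReal.mul_rpow_of_nonneg _ _ hinv0, ENNReal.mul_rpow_of_nonneg _ _ hinv0,
          ← ENNReal.rpow_mul, ← ENNReal.rpow_mul]
        have : θ * (1 / (q - ε)) = 1 / (q - ε₀) := by
          rw [hθ]
          have : q - ε ≠ 0 := by linarith
          field_simp
        rw [this]
        ring
    _ ≤ (1 + ENNReal.ofReal q) * (1 + J) * ((1 + ENNReal.ofReal ε₀⁻¹) *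
      ((1 + K₁) * grandNorm q w a univ g)) := by
        refine mul_le_mul' (mul_le_mul' ?_ ?_) hXle
        · refine (rpow_le_one_add _ hinv0 hinv1).trans ?_
          gcongr
          linarith
        · exact rpow_le_one_add _ (mul_nonneg (by linarith) hinv0)
            (mul_le_one₀ (by linarith) hinv0 hinv1)
    _ = _ := by rw [hL]; ring

/-! ### Weights positive almost everywhere -/

lemma MemAq.congr_ae {n : ℕ} {q : ℝ} {v w : (𝔼 n) → ℝ} (hvw : v =ᵐ[volume] w) (h : MemAq q v) :
    MemAq q w := by
  obtain ⟨C, hC, h⟩ := h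
  refine ⟨C, hC, fun c r hr => le_trans (le_of_eq ?_) (h c r hr)⟩
  have h1 : ∫⁻ x in axisCube c r, ENNReal.ofReal (w x) =
      ∫⁻ x in axisCube c r, ENNReal.ofReal (v x) :=
    lintegral_congr_ae (ae_restrict_of_ae (hvw.mono fun x hx => by simp only [hx]))
  have h2 : ∫⁻ x in axisCube c r, ENNReal.ofReal (w x ^ (-(1 / (q - 1)))) =
      ∫⁻ x in axisCube c r, ENNReal.ofReal (v x ^ (-(1 / (q - 1)))) :=
    lintegral_congr_ae (ae_restrict_of_ae (hvw.mono fun x hx => by simp only [hx]))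
  rw [h1, h2]

lemma wLqNorm_congr_ae {n : ℕ} {q : ℝ} {v w f g : (𝔼 n) → ℝ} (hvw : v =ᵐ[volume] w)
    (hfg : f =ᵐ[volume] g) : wLqNorm q v univ f = wLqNorm q w univ g := by
  rw [wLqNorm, wLqNorm]
  congr 1
  refine lintegral_congr_ae (ae_restrict_of_ae ?_)
  filter_upwards [hvw, hfg] with x h1 h2
  rw [h1, h2]

lemma grandNorm_congr_ae {n : ℕ} {q : ℝ} {v w a b : (𝔼 n) → ℝ} (hvw : v =ᵐ[volume] w)
    (hab : a =ᵐ[volume] b) (f : (𝔼 n) → ℝ) : grandNorm q v a univ f = grandNorm q w b univ f := by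
  rw [grandNorm, grandNorm]
  refine iSup_congr fun ε => iSup_congr fun _ => ?_
  congr 2
  refine lintegral_congr_ae (ae_restrict_of_ae ?_)
  filter_upwards [hvw, hab] with x h1 h2
  rw [h1, h2]

lemma exists_pos_version {n : ℕ} {w : (𝔼 n) → ℝ} (hm : Measurable w)
    (hw : ∀ᵐ x ∂volume, 0 < w x) :
    ∃ v : (𝔼 n) → ℝ, Measurable v ∧ (∀ x, 0 < v x) ∧ w =ᵐ[volume] v := by
  refine ⟨fun x => if 0 < w x then w x else 1,
    Measurable.ite (measurableSet_lt measurable_const hm) hm measurable_const, fun x => ?_, ?_⟩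
  · dsimp only
    split_ifs with h
    · exact h
    · exact one_pos
  · filter_upwards [hw] with x hx
    rw [if_pos hx]

/-- if `w ∈ A_q(ℝⁿ)`, `a ∈ L^q(ℝⁿ,w)` and `a^δ ∈ A_q(ℝⁿ)` for some
`δ > 0`, then the Hardy--Littlewood maximal operator is bounded on
`L^{q)}_a(ℝⁿ,w)`: there is a positive constant `K_q` with
`‖Mg‖_{L^{q)}_a(ℝⁿ,w)} ≤ K_q ‖g‖_{L^{q)}_a(ℝⁿ,w)}` for all `g ∈ L^{q)}_a(ℝⁿ,w)`. -/
theorem maximal_bounded_grand_lebesgue {n : ℕ} (q : ℝ) (hq : 1 < q)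
    (w a : EuclideanSpace ℝ (Fin n) → ℝ)
    (hw_meas : Measurable w) (hw_pos : ∀ᵐ x ∂volume, 0 < w x)
    (ha_meas : Measurable a) (ha_pos : ∀ᵐ x ∂volume, 0 < a x)
    (δ : ℝ) (hδ : 0 < δ) (haδ : MemAq q (fun x => a x ^ δ))
    (ha_mem : wLqNorm q w univ a ≠ ⊤)
    (hw : MemAq q w) :
    ∃ K : ℝ≥0∞, 0 < K ∧ K ≠ ⊤ ∧
      ∀ g : EuclideanSpace ℝ (Fin n) → ℝ, Measurable g →
        grandNorm q w a univ g ≠ ⊤ →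
        grandNorm q w a univ (fun x => (maximalFn g x).toReal)
          ≤ K * grandNorm q w a univ g := by
  obtain ⟨w', hw'm, hw', hww⟩ := exists_pos_version hw_meas hw_pos
  obtain ⟨a', ha'm, ha', haa⟩ := exists_pos_version ha_meas ha_pos
  obtain ⟨K, hK0, hKt, hK⟩ := maximal_bounded_of_pos q hq w' a' hw'm hw' ha'm ha' δ hδ
    (haδ.congr_ae (haa.mono fun x hx => by simp only [hx]))
    (by rwa [← wLqNorm_congr_ae hww haa]) (hw.congr_ae hww)
  refine ⟨K, hK0, hKt, fun g hg _ => ?_⟩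
  rw [grandNorm_congr_ae hww haa, grandNorm_congr_ae hww haa]
  exact hK g hg
end

section
/- Let 1 < q < ∞, let Ω ⊂ ℝⁿ be a bounded domain, and let t ∈ (0, ∞] be fixed. Then there exists a constant K_q, independent of g, such that ‖M_t g‖_{L^{q)}(Ω)} ≤ K_q ‖g‖_{L^{q)}(Ω)} for all g ∈ L^{q)}(Ω), where g is extended by zero outside Ω. -/
/-!
Write `p = q - ε`. Near `ε = 0` the exponents `p` stay away from `1`, and there the maximal operator
is bounded on `L^p` with a constant uniform in `p`: the weak type `(1,1)` inequality comes from
Vitali's covering lemma, and splitting `g` at height `s / 2` inside the layer-cake formula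
(Marcinkiewicz interpolation) gives `(p - 1) ∫ (M g)^p ≤ 6ⁿ p 2^p ∫ |g|^p`.
Multiplying by `ε` and taking `p`-th roots bounds the part `0 < ε ≤ (q - 1) / 2` of the supremum.

For `ε > (q - 1) / 2` the `L^p` constant of `M` degenerates as `p → 1`, but since `Ω` is bounded,
hence of finite measure, Hölder's inequality controls the `L^p(Ω)` norm of `M_t g` by its
`L^{p₀}(Ω)` norm with `p₀ = (q + 1) / 2`, which is the endpoint `ε = (q - 1) / 2` already treated.
-/

open MeasureTheory Metric Set ENNReal

/-- The grand Lebesgue norm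
`‖g‖_{L^{q)}(Ω)} = sup_{0<ε<q−1} (ε ∫_Ω |g|^{q−ε} dx)^{1/(q−ε)}`. -/
noncomputable def grandLNorm {n : ℕ} (q : ℝ) (Ω : Set (EuclideanSpace ℝ (Fin n)))
    (f : EuclideanSpace ℝ (Fin n) → ℝ) : ℝ≥0∞ :=
  ⨆ (ε : ℝ) (_ : ε ∈ Set.Ioo (0 : ℝ) (q - 1)),
    (ENNReal.ofReal ε * ∫⁻ x in Ω, ENNReal.ofReal |f x| ^ (q - ε)) ^ (1 / (q - ε))

/-- The truncated Hardy--Littlewood maximal operator `M_t`, `0 < t ≤ ∞`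
(`t : ℝ≥0∞` so that `t = ∞` gives the full maximal operator `M`). -/
noncomputable def truncMaximal {n : ℕ} (t : ℝ≥0∞) (g : EuclideanSpace ℝ (Fin n) → ℝ)
    (x : EuclideanSpace ℝ (Fin n)) : ℝ≥0∞ :=
  ⨆ (r : ℝ) (_ : 0 < r) (_ : ENNReal.ofReal r ≤ t),
    (volume (ball x r))⁻¹ * ∫⁻ y in ball x r, ENNReal.ofReal |g y|

/-! ### The weak type `(1,1)` inequality -/

/-- The Hardy-Littlewood maximal function over all radii, of a function with values in `ℝ≥0∞`. -/
noncomputable def maxFn {n : ℕ} (h : EuclideanSpace ℝ (Fin n) → ℝ≥0∞)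
    (x : EuclideanSpace ℝ (Fin n)) : ℝ≥0∞ :=
  ⨆ (r : ℝ) (_ : 0 < r), (volume (ball x r))⁻¹ * ∫⁻ y in ball x r, h y

/-- Weak type `(1,1)` for balls of radius at most `R`, the bound needed by the covering lemma. -/
lemma weak_type_bounded {n : ℕ} (h : EuclideanSpace ℝ (Fin n) → ℝ≥0∞) (c : ℝ≥0∞) (R : ℝ) :
    c * volume {x : EuclideanSpace ℝ (Fin n) | ∃ r, 0 < r ∧ r ≤ R ∧
      c < (volume (ball x r))⁻¹ * ∫⁻ y in ball x r, h y} ≤ 6 ^ n * ∫⁻ y, h y := by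
  set E := {x : EuclideanSpace ℝ (Fin n) | ∃ r, 0 < r ∧ r ≤ R ∧
      c < (volume (ball x r))⁻¹ * ∫⁻ y in ball x r, h y} with hE
  have key : ∀ x : EuclideanSpace ℝ (Fin n), ∃ r : ℝ, x ∈ E → 0 < r ∧ r ≤ R ∧
      c < (volume (ball x r))⁻¹ * ∫⁻ y in ball x r, h y := by
    intro x
    by_cases hx : x ∈ E
    · obtain ⟨r, hr⟩ := hx
      exact ⟨r, fun _ => hr⟩
    · exact ⟨0, fun h => absurd h hx⟩
  choose r hr using key
  obtain ⟨u, huE, hdisj, hcov⟩ :=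
    Vitali.exists_disjoint_subfamily_covering_enlargement_closedBall E id r R
      (fun a ha => (hr a ha).2.1) 5 (by norm_num)
  have hcount : u.Countable := hdisj.countable_of_nonempty_interior fun i hi =>
    (nonempty_ball.2 (hr i (huE hi)).1).mono ball_subset_interior_closedBall
  have hsub : E ⊆ ⋃ b ∈ u, ball b (6 * r b) := by
    intro x hx
    obtain ⟨b, hb, hxb⟩ := hcov x hx
    refine mem_iUnion₂.2 ⟨b, hb, ?_⟩
    have h1 : x ∈ closedBall (id b) (5 * r b) :=
      hxb (mem_closedBall_self (hr x hx).1.le)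
    have h2 := (hr b (huE hb)).1
    exact closedBall_subset_ball (by linarith) h1
  have hball : ∀ b ∈ u, c * volume (ball b (6 * r b)) ≤ 6 ^ n * ∫⁻ y in ball b (r b), h y := by
    intro b hb
    obtain ⟨hpos, -, hlt⟩ := hr b (huE hb)
    have hv0 : volume (ball b (r b)) ≠ 0 := (measure_ball_pos _ _ hpos).ne'
    have hvt : volume (ball b (r b)) ≠ ⊤ := measure_ball_lt_top.ne
    have h6 : volume (ball b (6 * r b)) = 6 ^ n * volume (ball b (r b)) := by
      rw [Measure.addHaar_ball_mul_of_pos volume b (by norm_num) (r b),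
        Measure.addHaar_ball_center volume b]
      simp [ENNReal.ofReal_pow]
    have : c * volume (ball b (r b)) ≤ ∫⁻ y in ball b (r b), h y := by
      calc c * volume (ball b (r b))
          ≤ ((volume (ball b (r b)))⁻¹ * ∫⁻ y in ball b (r b), h y) * volume (ball b (r b)) := by
            gcongr
        _ = ∫⁻ y in ball b (r b), h y := by
            rw [mul_comm, ← mul_assoc, ENNReal.mul_inv_cancel hv0 hvt, one_mul]
    calc c * volume (ball b (6 * r b)) = 6 ^ n * (c * volume (ball b (r b))) := by
          rw [h6]; ring
      _ ≤ _ := by gcongr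
  have := hcount.to_subtype
  calc c * volume E ≤ c * volume (⋃ b ∈ u, ball b (6 * r b)) := by gcongr
    _ ≤ c * ∑' b : u, volume (ball (b : EuclideanSpace ℝ (Fin n)) (6 * r b)) := by
        gcongr
        exact measure_biUnion_le _ hcount _
    _ = ∑' b : u, c * volume (ball (b : EuclideanSpace ℝ (Fin n)) (6 * r b)) :=
        ENNReal.tsum_mul_left.symm
    _ ≤ ∑' b : u, 6 ^ n * ∫⁻ y in ball (b : EuclideanSpace ℝ (Fin n)) (r b), h y :=
        ENNReal.tsum_le_tsum fun b => hball b b.2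
    _ = 6 ^ n * ∑' b : u, ∫⁻ y in ball (b : EuclideanSpace ℝ (Fin n)) (r b), h y :=
        ENNReal.tsum_mul_left
    _ = 6 ^ n * ∫⁻ y in ⋃ b ∈ u, ball b (r b), h y := by
        rw [lintegral_biUnion (t := u) (s := fun b => ball b (r b)) hcount
          (fun b _ => measurableSet_ball) (hdisj.mono fun b => ball_subset_closedBall)]
    _ ≤ 6 ^ n * ∫⁻ y, h y := by
        gcongr
        exact Measure.restrict_le_self

lemma weak_type {n : ℕ} (h : EuclideanSpace ℝ (Fin n) → ℝ≥0∞) (c : ℝ≥0∞) :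
    c * volume {x | c < maxFn h x} ≤ 6 ^ n * ∫⁻ y, h y := by
  have hU : {x | c < maxFn h x} = ⋃ N : ℕ, {x | ∃ r, 0 < r ∧ r ≤ (N : ℝ) ∧
      c < (volume (ball x r))⁻¹ * ∫⁻ y in ball x r, h y} := by
    ext x
    simp only [maxFn, mem_ofPred_eq, lt_iSup_iff, mem_iUnion]
    constructor
    · rintro ⟨r, hr, hc⟩
      obtain ⟨N, hN⟩ := exists_nat_ge r
      exact ⟨N, r, hr, hN, hc⟩
    · rintro ⟨N, r, hr, -, hc⟩
      exact ⟨r, hr, hc⟩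
  have hmono : Monotone fun N : ℕ => {x : EuclideanSpace ℝ (Fin n) | ∃ r, 0 < r ∧ r ≤ (N : ℝ) ∧
      c < (volume (ball x r))⁻¹ * ∫⁻ y in ball x r, h y} := by
    rintro N M hNM x ⟨r, hr, hN, hc⟩
    exact ⟨r, hr, hN.trans (by exact_mod_cast hNM), hc⟩
  rw [hU, hmono.measure_iUnion, ENNReal.mul_iSup]
  exact iSup_le fun N => weak_type_bounded h c N

/-! ### Measurability of the truncated maximal function -/

/-- Every average defining `M_t` is lower semicontinuous in the centre, because a ball is the
increasing union of its concentric smaller balls; hence so is the (uncountable) supremum. -/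
lemma measurable_truncMaximal {n : ℕ} (t : ℝ≥0∞) (g : EuclideanSpace ℝ (Fin n) → ℝ) :
    Measurable (truncMaximal t g) := by
  apply LowerSemicontinuous.measurable
  refine lowerSemicontinuous_iSup fun r => lowerSemicontinuous_iSup fun hr =>
    lowerSemicontinuous_iSup fun _ => ?_
  intro x c hc
  set ν := volume.withDensity fun y => ENNReal.ofReal |g y| with hν
  have hν' : ∀ (y : EuclideanSpace ℝ (Fin n)) (s : ℝ),
      ∫⁻ z in ball y s, ENNReal.ofReal |g z| = ν (ball y s) := fun y s =>
    (withDensity_apply _ measurableSet_ball).symm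
  simp only [hν'] at hc ⊢
  have hU : ball x r = ⋃ k : ℕ, ball x (r - 1 / ((k : ℝ) + 1)) := by
    ext y
    simp only [mem_ball, mem_iUnion]
    constructor
    · intro hy
      obtain ⟨k, hk⟩ := exists_nat_one_div_lt (sub_pos.2 hy)
      exact ⟨k, by linarith⟩
    · rintro ⟨k, hk⟩
      have : (0 : ℝ) < 1 / ((k : ℝ) + 1) := by positivity
      linarith
  have hmono : Monotone fun k : ℕ => ball x (r - 1 / ((k : ℝ) + 1)) := by
    intro k l hkl
    apply ball_subset_ball
    have := one_div_le_one_div_of_le (by positivity : (0 : ℝ) < (k : ℝ) + 1)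
      (by gcongr : (k : ℝ) + 1 ≤ (l : ℝ) + 1)
    linarith
  rw [Measure.addHaar_ball_center volume x] at hc
  conv at hc => rw [hU]
  rw [hmono.measure_iUnion, ENNReal.mul_iSup, gt_iff_lt, lt_iSup_iff] at hc
  obtain ⟨k, hk⟩ := hc
  have hpos : (0 : ℝ) < 1 / ((k : ℝ) + 1) := by positivity
  filter_upwards [ball_mem_nhds x hpos] with y hy
  rw [Measure.addHaar_ball_center volume y]
  refine hk.trans_le ?_
  gcongr
  apply ball_subset_ball'
  rw [mem_ball, dist_comm] at hy
  linarith

/-! ### Strong type inequalities with explicit constants -/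

/-- Only the part of `h` above height `c` matters for the level set of `M h` at height `2 c`:
the rest contributes at most `c` to each average. -/
lemma maxFn_le_split {n : ℕ} (h : EuclideanSpace ℝ (Fin n) → ℝ≥0∞) (c : ℝ≥0∞)
    (x : EuclideanSpace ℝ (Fin n)) :
    maxFn h x ≤ maxFn ({y | c < h y}.indicator h) x + c := by
  refine iSup₂_le fun r hr => ?_
  have hv0 : volume (ball x r) ≠ 0 := (measure_ball_pos _ _ hr).ne'
  have hvt : volume (ball x r) ≠ ⊤ := measure_ball_lt_top.ne
  have hle : ∫⁻ y in ball x r, h y ≤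
      (∫⁻ y in ball x r, {y | c < h y}.indicator h y) + c * volume (ball x r) := by
    rw [← setLIntegral_const, ← lintegral_add_right _ measurable_const]
    refine lintegral_mono fun y => ?_
    by_cases hy : c < h y
    · simp [indicator, hy]
    · have hy' : y ∉ {y | c < h y} := hy
      rw [indicator_of_notMem hy', zero_add]
      exact not_lt.1 hy
  calc (volume (ball x r))⁻¹ * ∫⁻ y in ball x r, h y
      ≤ (volume (ball x r))⁻¹ * ((∫⁻ y in ball x r, {y | c < h y}.indicator h y)
          + c * volume (ball x r)) := by gcongr
    _ = (volume (ball x r))⁻¹ * (∫⁻ y in ball x r, {y | c < h y}.indicator h y) + c := by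
        rw [mul_add, mul_comm c, ← mul_assoc _ _ c, ENNReal.inv_mul_cancel hv0 hvt, one_mul]
    _ ≤ _ := by
        gcongr
        exact le_iSup₂ (f := fun (r : ℝ) (_ : 0 < r) => (volume (ball x r))⁻¹ *
          ∫⁻ y in ball x r, {y | c < h y}.indicator h y) r hr

/-- The strong type `(p,p)` inequality, with its dependence on `p` explicit. Both sides are computed
by the layer-cake formula, the right one with respect to the measure `G dx` and the exponent
`p - 1`, which replaces the exchange of integrals in Marcinkiewicz's argument. -/
lemma strong_type {n : ℕ} (F G : EuclideanSpace ℝ (Fin n) → ℝ) (hF : Measurable F)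
    (hG : Measurable G) (hF0 : ∀ x, 0 ≤ F x) (hG0 : ∀ x, 0 ≤ G x)
    (hFG : ∀ x, ENNReal.ofReal (F x) ≤ maxFn (fun y => ENNReal.ofReal (G y)) x)
    (p : ℝ) (hp : 1 < p) :
    ENNReal.ofReal (p - 1) * ∫⁻ x, ENNReal.ofReal (F x ^ p) ≤
      6 ^ n * ENNReal.ofReal (p * 2 ^ p) * ∫⁻ x, ENNReal.ofReal (G x ^ p) := by
  set h := fun y => ENNReal.ofReal (G y) with hh
  have hmeas : Measurable h := hG.ennreal_ofReal
  set ν := volume.withDensity h with hν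
  have hlevel : ∀ s ∈ Ioi (0 : ℝ), volume {x | s < F x} * ENNReal.ofReal (s ^ (p - 1)) ≤
      2 * 6 ^ n * (ν {x | s < 2 * G x} * ENNReal.ofReal (s ^ (p - 1 - 1))) := by
    intro s hs
    have hs : 0 < s := hs
    have hset : {y | ENNReal.ofReal (s / 2) < h y} = {x | s < 2 * G x} := by
      ext y
      simp only [hh, mem_ofPred_eq, ENNReal.ofReal_lt_ofReal_iff_of_nonneg (by positivity : 0 ≤ s / 2)]
      constructor <;> intro <;> linarith
    have hsub : {x | s < F x} ⊆ {x | ENNReal.ofReal (s / 2) <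
        maxFn ({y | ENNReal.ofReal (s / 2) < h y}.indicator h) x} := by
      intro x hx
      by_contra hcon
      have h1 := (hFG x).trans (maxFn_le_split h (ENNReal.ofReal (s / 2)) x)
      have h2 := h1.trans (add_le_add_left (not_lt.1 hcon) _)
      rw [← ENNReal.ofReal_add (by positivity) (by positivity), add_halves,
        ENNReal.ofReal_le_ofReal_iff hs.le] at h2
      exact absurd hx (not_lt.2 h2)
    have hw := weak_type ({y | ENNReal.ofReal (s / 2) < h y}.indicator h) (ENNReal.ofReal (s / 2))
    have hmset : MeasurableSet {x | s < 2 * G x} :=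
      measurableSet_lt measurable_const (hG.const_mul 2)
    have hint : ∫⁻ y, {y | ENNReal.ofReal (s / 2) < h y}.indicator h y = ν {x | s < 2 * G x} := by
      rw [hset, lintegral_indicator hmset, hν, withDensity_apply _ hmset]
    have hw' : ENNReal.ofReal (s / 2) * volume {x | s < F x} ≤ 6 ^ n * ν {x | s < 2 * G x} := by
      rw [← hint]
      exact le_trans (by gcongr) hw
    have hpow : ENNReal.ofReal (s ^ (p - 1)) =
        2 * ENNReal.ofReal (s / 2) * ENNReal.ofReal (s ^ (p - 1 - 1)) := by
      rw [← ENNReal.ofReal_ofNat 2, ← ENNReal.ofReal_mul (by norm_num),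
        ← ENNReal.ofReal_mul (by positivity), Real.rpow_sub_one hs.ne' (p - 1)]
      congr 1
      field_simp
    calc volume {x | s < F x} * ENNReal.ofReal (s ^ (p - 1))
        = 2 * (ENNReal.ofReal (s / 2) * volume {x | s < F x}) * ENNReal.ofReal (s ^ (p - 1 - 1)) := by
          rw [hpow]; ring
      _ ≤ 2 * (6 ^ n * ν {x | s < 2 * G x}) * ENNReal.ofReal (s ^ (p - 1 - 1)) := by gcongr
      _ = _ := by ring
  have hL := lintegral_rpow_eq_lintegral_meas_lt_mul volume (Filter.Eventually.of_forall hF0)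
    hF.aemeasurable (by linarith : 0 < p)
  have hR := lintegral_rpow_eq_lintegral_meas_lt_mul ν
    (Filter.Eventually.of_forall fun x => mul_nonneg zero_le_two (hG0 x))
    (hG.const_mul 2).aemeasurable (by linarith : 0 < p - 1)
  have hR' : ∫⁻ x, ENNReal.ofReal ((2 * G x) ^ (p - 1)) ∂ν =
      ENNReal.ofReal (2 ^ (p - 1)) * ∫⁻ x, ENNReal.ofReal (G x ^ p) := by
    rw [hν, lintegral_withDensity_eq_lintegral_mul _ hmeas
      ((hG.const_mul 2).pow_const _).ennreal_ofReal,
      ← lintegral_const_mul _ (hG.pow_const _).ennreal_ofReal]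
    refine lintegral_congr fun x => ?_
    rw [Pi.mul_apply, ← ENNReal.ofReal_mul (hG0 x), ← ENNReal.ofReal_mul (by positivity),
      Real.mul_rpow zero_le_two (hG0 x)]
    congr 1
    rcases (hG0 x).eq_or_lt with h0 | h0
    · rw [← h0, Real.zero_rpow (by linarith : p ≠ 0)]; simp
    · rw [Real.rpow_sub_one h0.ne' p]; field_simp
  calc ENNReal.ofReal (p - 1) * ∫⁻ x, ENNReal.ofReal (F x ^ p)
      ≤ ENNReal.ofReal (p - 1) * (ENNReal.ofReal p * ∫⁻ s in Ioi (0 : ℝ),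
          2 * 6 ^ n * (ν {x | s < 2 * G x} * ENNReal.ofReal (s ^ (p - 1 - 1)))) := by
        rw [hL]
        gcongr _ * (_ * ?_)
        exact setLIntegral_mono' measurableSet_Ioi hlevel
    _ = 6 ^ n * ENNReal.ofReal p * 2 * (ENNReal.ofReal (p - 1) * ∫⁻ s in Ioi (0 : ℝ),
          (ν {x | s < 2 * G x} * ENNReal.ofReal (s ^ (p - 1 - 1)))) := by
        rw [lintegral_const_mul' _ _ (by finiteness)]; ring
    _ = 6 ^ n * (ENNReal.ofReal p * 2 * ENNReal.ofReal (2 ^ (p - 1))) *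
          ∫⁻ x, ENNReal.ofReal (G x ^ p) := by
        rw [← hR, hR']; ring
    _ = _ := by
        have : ENNReal.ofReal p * 2 * ENNReal.ofReal (2 ^ (p - 1)) = ENNReal.ofReal (p * 2 ^ p) := by
          rw [← ENNReal.ofReal_ofNat 2, ← ENNReal.ofReal_mul (by linarith),
            ← ENNReal.ofReal_mul (by linarith), Real.rpow_sub_one two_ne_zero p]
          congr 1
          field_simp
        rw [this]

/-- Together with `ENNReal.ofReal_toReal_le` this also covers the points where `M_t g = ∞`, at which
`toReal` takes the value `0`. -/
lemma truncMaximal_le_maxFn {n : ℕ} (t : ℝ≥0∞) (g : EuclideanSpace ℝ (Fin n) → ℝ)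
    (x : EuclideanSpace ℝ (Fin n)) :
    truncMaximal t g x ≤ maxFn (fun y => ENNReal.ofReal |g y|) x :=
  iSup₂_mono fun _ _ => iSup_le fun _ => le_rfl

/-- One constant serves all exponents `p ∈ [p₀, q]` as soon as `p₀ > 1`. -/
lemma uniform_strong_type {n : ℕ} (p₀ q : ℝ) (hp₀ : 1 < p₀) (Ω : Set (EuclideanSpace ℝ (Fin n)))
    (hΩ : MeasurableSet Ω) (t : ℝ≥0∞) :
    ∃ D : ℝ≥0∞, D ≠ ⊤ ∧ 1 ≤ D ∧ ∀ g : EuclideanSpace ℝ (Fin n) → ℝ, Measurable g →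
      ∀ p ∈ Icc p₀ q,
        ∫⁻ x in Ω, ENNReal.ofReal |(truncMaximal t (Ω.indicator g) x).toReal| ^ p ≤
          D * ∫⁻ x in Ω, ENNReal.ofReal |g x| ^ p := by
  have hd : ENNReal.ofReal (p₀ - 1) ≠ 0 := by simpa using hp₀
  refine ⟨max 1 ((ENNReal.ofReal (p₀ - 1))⁻¹ * (6 ^ n * ENNReal.ofReal (q * 2 ^ q))), ?_,
    le_max_left _ _, ?_⟩
  · have : (ENNReal.ofReal (p₀ - 1))⁻¹ ≠ ⊤ := ENNReal.inv_ne_top.2 hd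
    exact (max_lt one_lt_top (by finiteness)).ne
  intro g hg p ⟨hp, hpq⟩
  have hp0 : 0 ≤ p := by linarith
  have hs := strong_type (fun x => (truncMaximal t (Ω.indicator g) x).toReal)
    (fun x => |Ω.indicator g x|) (measurable_truncMaximal t _).ennreal_toReal
    (hg.indicator hΩ).abs (fun _ => toReal_nonneg) (fun _ => abs_nonneg _)
    (fun x => ENNReal.ofReal_toReal_le.trans (truncMaximal_le_maxFn t _ x)) p (by linarith)
  have hGint : ∫⁻ x, ENNReal.ofReal (|Ω.indicator g x| ^ p) =
      ∫⁻ x in Ω, ENNReal.ofReal |g x| ^ p := by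
    rw [← lintegral_indicator hΩ]
    refine lintegral_congr fun x => ?_
    by_cases hx : x ∈ Ω
    · simp [hx, ENNReal.ofReal_rpow_of_nonneg (abs_nonneg _) hp0]
    · simp [hx, Real.zero_rpow (by linarith : p ≠ 0)]
  have hFint : ∫⁻ x in Ω, ENNReal.ofReal |(truncMaximal t (Ω.indicator g) x).toReal| ^ p ≤
      ∫⁻ x, ENNReal.ofReal ((truncMaximal t (Ω.indicator g) x).toReal ^ p) := by
    refine (setLIntegral_le_lintegral _ _).trans_eq (lintegral_congr fun x => ?_)
    rw [abs_of_nonneg toReal_nonneg, ENNReal.ofReal_rpow_of_nonneg toReal_nonneg hp0]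
  rw [hGint] at hs
  have hq : p * 2 ^ p ≤ q * 2 ^ q := by
    have : (2 : ℝ) ^ p ≤ 2 ^ q := Real.rpow_le_rpow_of_exponent_le one_le_two hpq
    gcongr
    linarith
  refine le_trans ?_ (mul_le_mul_left (le_max_right _ _) _)
  rw [mul_assoc, ← ENNReal.mul_le_iff_le_inv hd ENNReal.ofReal_ne_top]
  calc _ ≤ ENNReal.ofReal (p - 1) *
        ∫⁻ x, ENNReal.ofReal ((truncMaximal t (Ω.indicator g) x).toReal ^ p) := by gcongr
    _ ≤ _ := hs
    _ ≤ _ := by gcongr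

/-! ### The grand Lebesgue norm -/

lemma rpow_one_div_le_self {a : ℝ≥0∞} (ha : 1 ≤ a) {p : ℝ} (hp : 1 ≤ p) : a ^ (1 / p) ≤ a := by
  conv_rhs => rw [← ENNReal.rpow_one a]
  exact ENNReal.rpow_le_rpow_of_exponent_le ha ((div_le_one (by linarith)).2 hp)

/-- for `1 < q < ∞`, a bounded domain `Ω ⊂ ℝⁿ` and fixed
`t ∈ (0,∞]`, there is a constant `K_q` (independent of `g`) with
`‖M_t g‖_{L^{q)}(Ω)} ≤ K_q ‖g‖_{L^{q)}(Ω)}` for all `g ∈ L^{q)}(Ω)`,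
`g` being extended by zero outside `Ω`. -/
theorem truncated_maximal_bounded_grand_lebesgue {n : ℕ} (q : ℝ) (hq : 1 < q)
    (Ω : Set (EuclideanSpace ℝ (Fin n))) (hΩ_open : IsOpen Ω)
    (hΩ_conn : IsConnected Ω) (hΩ_bdd : Bornology.IsBounded Ω)
    (t : ℝ≥0∞) (ht : 0 < t) :
    ∃ K : ℝ≥0∞, K ≠ ⊤ ∧
      ∀ g : EuclideanSpace ℝ (Fin n) → ℝ, Measurable g → grandLNorm q Ω g ≠ ⊤ →
        grandLNorm q Ω (fun x => (truncMaximal t (Ω.indicator g) x).toReal)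
          ≤ K * grandLNorm q Ω g := by
  set σ := (q - 1) / 2 with hσ
  have hσ0 : 0 < σ := by linarith [hσ]
  have hσq : σ < q - 1 := by linarith [hσ]
  obtain ⟨D, hDt, hD1, hD⟩ :=
    uniform_strong_type (q - σ) q (by linarith) Ω hΩ_open.measurableSet t
  have hvol : volume Ω ≠ ⊤ := hΩ_bdd.measure_lt_top.ne
  set V := max 1 (volume Ω) with hV
  have hVt : V ≠ ⊤ := (max_lt one_lt_top hvol.lt_top).ne
  set S := (ENNReal.ofReal σ ^ (1 / (q - σ)))⁻¹ with hS
  have hσp : ENNReal.ofReal σ ^ (1 / (q - σ)) ≠ 0 := by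
    have : 0 < ENNReal.ofReal σ := by simpa using hσ0
    exact (ENNReal.rpow_pos this ENNReal.ofReal_ne_top).ne'
  have hσpt : ENNReal.ofReal σ ^ (1 / (q - σ)) ≠ ⊤ :=
    ENNReal.rpow_ne_top_of_nonneg (by apply one_div_nonneg.2; linarith) ENNReal.ofReal_ne_top
  have hSt : S ≠ ⊤ := ENNReal.inv_ne_top.2 hσp
  set K₁ := ENNReal.ofReal q * S * V with hK₁
  have hK₁t : K₁ ≠ ⊤ := by finiteness
  refine ⟨max 1 K₁ * D, ENNReal.mul_ne_top (max_lt one_lt_top hK₁t.lt_top).ne hDt, ?_⟩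
  intro g hg _
  set F := fun x => (truncMaximal t (Ω.indicator g) x).toReal with hF
  have hFm : Measurable F := (measurable_truncMaximal t _).ennreal_toReal
  have hsmall : ∀ ε ∈ Ioc 0 σ,
      (ENNReal.ofReal ε * ∫⁻ x in Ω, ENNReal.ofReal |F x| ^ (q - ε)) ^ (1 / (q - ε)) ≤
        D * grandLNorm q Ω g := by
    intro ε ⟨h0, h1⟩
    have hp : 1 ≤ q - ε := by linarith
    have hp' : 0 ≤ 1 / (q - ε) := one_div_nonneg.2 (by linarith)
    calc (ENNReal.ofReal ε * ∫⁻ x in Ω, ENNReal.ofReal |F x| ^ (q - ε)) ^ (1 / (q - ε))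
        ≤ (D * (ENNReal.ofReal ε * ∫⁻ x in Ω, ENNReal.ofReal |g x| ^ (q - ε))) ^ (1 / (q - ε)) := by
          refine ENNReal.rpow_le_rpow ?_ hp'
          rw [mul_left_comm]
          gcongr
          exact hD g hg (q - ε) ⟨by linarith, by linarith⟩
      _ = D ^ (1 / (q - ε)) *
          (ENNReal.ofReal ε * ∫⁻ x in Ω, ENNReal.ofReal |g x| ^ (q - ε)) ^ (1 / (q - ε)) :=
          ENNReal.mul_rpow_of_nonneg _ _ hp'
      _ ≤ D * grandLNorm q Ω g := by
          gcongr
          · exact rpow_one_div_le_self hD1 hp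
          · exact le_iSup₂ (f := fun (ε : ℝ) (_ : ε ∈ Set.Ioo (0 : ℝ) (q - 1)) =>
              (ENNReal.ofReal ε * ∫⁻ x in Ω, ENNReal.ofReal |g x| ^ (q - ε)) ^ (1 / (q - ε)))
              ε ⟨h0, by linarith⟩
  refine iSup₂_le fun ε hε => ?_
  obtain ⟨h0, h1⟩ := hε
  by_cases hεσ : ε ≤ σ
  · refine (hsmall ε ⟨h0, hεσ⟩).trans ?_
    gcongr
    exact le_mul_of_one_le_left zero_le (le_max_left _ _)
  · push Not at hεσ
    have hp : 1 < q - ε := by linarith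
    have hp' : 0 ≤ 1 / (q - ε) := one_div_nonneg.2 (by linarith)
    have hpσ : 0 ≤ 1 / (q - σ) := one_div_nonneg.2 (by linarith)
    have hH := eLpNorm'_le_eLpNorm'_mul_rpow_measure_univ (μ := volume.restrict Ω) (f := F)
      (by linarith : 0 < q - ε) (by linarith : q - ε ≤ q - σ) hFm.aestronglyMeasurable
    simp only [eLpNorm', Measure.restrict_apply_univ, Real.enorm_eq_ofReal_abs] at hH
    have hVpow : volume Ω ^ (1 / (q - ε) - 1 / (q - σ)) ≤ V := by
      have e0 : 0 ≤ 1 / (q - ε) - 1 / (q - σ) :=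
        sub_nonneg.2 (one_div_le_one_div_of_le (by linarith) (by linarith))
      have e1 : 1 / (q - ε) - 1 / (q - σ) ≤ 1 := by
        have := (div_le_one (by linarith : 0 < q - ε)).2 hp.le
        linarith
      calc volume Ω ^ (1 / (q - ε) - 1 / (q - σ))
          ≤ V ^ (1 / (q - ε) - 1 / (q - σ)) := ENNReal.rpow_le_rpow (le_max_right _ _) e0
        _ ≤ V ^ (1 : ℝ) := ENNReal.rpow_le_rpow_of_exponent_le (le_max_left _ _) e1
        _ = V := ENNReal.rpow_one V
    have hεpow : ENNReal.ofReal ε ^ (1 / (q - ε)) ≤ ENNReal.ofReal q := by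
      calc ENNReal.ofReal ε ^ (1 / (q - ε)) ≤ ENNReal.ofReal q ^ (1 / (q - ε)) :=
            ENNReal.rpow_le_rpow (ENNReal.ofReal_le_ofReal (by linarith)) hp'
        _ ≤ ENNReal.ofReal q :=
            rpow_one_div_le_self (by simpa using hq.le) hp.le
    -- The endpoint `ε = σ` of the range already treated.
    have hend := hsmall σ ⟨hσ0, le_rfl⟩
    rw [ENNReal.mul_rpow_of_nonneg _ _ hpσ] at hend
    have hend' : (∫⁻ x in Ω, ENNReal.ofReal |F x| ^ (q - σ)) ^ (1 / (q - σ)) ≤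
        S * (D * grandLNorm q Ω g) :=
      (ENNReal.mul_le_iff_le_inv hσp hσpt).1 hend
    rw [ENNReal.mul_rpow_of_nonneg _ _ hp']
    calc _ ≤ ENNReal.ofReal q * ((S * (D * grandLNorm q Ω g)) * V) := by
          gcongr
          exact hH.trans (by gcongr)
      _ = K₁ * D * grandLNorm q Ω g := by rw [hK₁]; ring
      _ ≤ _ := by
          gcongr
          exact le_max_right _ _
end
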